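/- arXiv:1902.03505 — 3 statements merged into one kernel-verified Lean document; each statement's English description precedes it below -/
import Mathlib

section
/- Let N ≥ 4 and let g : [0,1) → ℝ be 2⌊N/2⌋-times differentiable with g^{(k)}(t) ≥ 0 for all t ∈ [0,1) and all integers 0 ≤ k ≤ 2⌊N/2⌋ (g absolutely monotone up to 2⌊N/2⌋). Then X_N^(h) minimizes the energy Σ_{i≠j} g(|⟨x_i,x_j⟩|²) among all X ∈ S(N,2) whose vectors are pairwise non-parallel (|⟨x_i,x_j⟩| < 1 for all i ≠ j). If moreover g^{(k)}(t) > 0 for all t ∈ (0,1) and all 0 ≤ k ≤ 2⌊N/2⌋, then every minimizer is equivalent to X_N^(h). -/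
open scoped RealInnerProductSpace
open Real

/-- `X_N^(h)`: the `N`-tuple of unit vectors `(cos(kπ/N), sin(kπ/N))`, `k = 0,…,N−1`,
i.e. `N` equally spaced points on the half circle. -/
noncomputable def halfCircle (N : ℕ) : Fin N → EuclideanSpace ℝ (Fin 2) :=
  fun k => (WithLp.equiv 2 (Fin 2 → ℝ)).symm
    ![cos ((k : ℕ) * π / N), sin ((k : ℕ) * π / N)]

/-- Two configurations are equivalent if one is obtained from the other by an orthogonal
transformation, a permutation of the points, and sign switches. -/
def EquivConfig (d N : ℕ) (X Y : Fin N → EuclideanSpace ℝ (Fin d)) : Prop :=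
  ∃ (U : EuclideanSpace ℝ (Fin d) ≃ₗᵢ[ℝ] EuclideanSpace ℝ (Fin d))
    (σ : Equiv.Perm (Fin N)) (s : Fin N → ℝ),
    (∀ i, s i = 1 ∨ s i = -1) ∧ ∀ i, Y i = s i • U (X (σ i))

/-- The energy `Σ_{i≠j} g(|⟨x_i,x_j⟩|²)` of a tuple of unit vectors in `ℝ²`. -/
noncomputable def gEnergy (N : ℕ) (g : ℝ → ℝ)
    (X : Fin N → EuclideanSpace ℝ (Fin 2)) : ℝ :=
  ∑ i : Fin N, ∑ j : Fin N, if i ≠ j then g (|⟪X i, X j⟫| ^ 2) else 0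


structure AMSeq (n : ℕ) (b : ℝ) (st : Prop) (G : ℕ → ℝ → ℝ) : Prop where
  der : ∀ k < n, ∀ t, HasDerivAt (G k) (G (k+1) t) t
  cont : ∀ k ≤ n, Continuous (G k)
  nonneg : ∀ k ≤ n, ∀ t ∈ Set.Icc 0 b, 0 ≤ G k t
  pos : st → ∀ k ≤ n, ∀ t ∈ Set.Ioc 0 b, 0 < G k t

lemma param_hasDeriv (k : ℕ) (s : ℝ) (f f' : ℝ → ℝ) (hf : ∀ t, HasDerivAt f (f' t) t)
    (hc : Continuous f') (t : ℝ) :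
    HasDerivAt (fun t => ∫ u in (0:ℝ)..1, u^k * f (s + u*(t-s)))
      (∫ u in (0:ℝ)..1, u^(k+1) * f' (s+u*(t-s))) t := by
  have hfc : Continuous f := continuous_iff_continuousAt.2 fun t => (hf t).continuousAt
  have hcomp : IsCompact (Set.Icc (0:ℝ) 1 ×ˢ Metric.closedBall t 1) :=
    isCompact_Icc.prod (isCompact_closedBall t 1)
  obtain ⟨C, hC⟩ := hcomp.exists_bound_of_continuousOn
    (f := fun p : ℝ × ℝ => p.1^(k+1) * f' (s + p.1*(p.2-s))) (by fun_prop)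
  refine (intervalIntegral.hasDerivAt_integral_of_dominated_loc_of_deriv_le
    (F := fun t u => u^k * f (s + u*(t-s))) (F' := fun t u => u^(k+1) * f' (s+u*(t-s)))
    (bound := fun _ => C) (s := Metric.closedBall t 1)
    (Metric.closedBall_mem_nhds t one_pos) ?_ ?_ ?_ ?_ ?_ ?_).2
  · refine Filter.Eventually.of_forall fun x => ?_
    exact (by fun_prop : Continuous fun u => u^k * f (s + u*(x-s))).aestronglyMeasurable
  · exact (by fun_prop : Continuous fun u => u^k * f (s + u*(t-s))).intervalIntegrable _ _
  · exact (by fun_prop : Continuous fun u => u^(k+1) * f' (s + u*(t-s))).aestronglyMeasurable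
  · refine Filter.Eventually.of_forall fun u hu x hx => ?_
    rw [Set.uIoc_of_le zero_le_one] at hu
    exact hC (u, x) ⟨⟨hu.1.le, hu.2⟩, hx⟩
  · exact intervalIntegrable_const
  · refine Filter.Eventually.of_forall fun u hu x hx => ?_
    have h1 : HasDerivAt (fun x => s + u * (x - s)) u x := by
      simpa using (((hasDerivAt_id x).sub_const s).const_mul u).const_add s
    have := ((hf (s + u*(x-s))).comp x h1).const_mul (u^k)
    exact this.congr_deriv (by ring)

lemma AMSeq.step {n : ℕ} {b : ℝ} {st : Prop} {G : ℕ → ℝ → ℝ} (h : AMSeq (n+1) b st G)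
    {s : ℝ} (hs : s ∈ Set.Icc 0 b) :
    ∃ H, AMSeq n b st H ∧ (∀ t, G 0 t = G 0 s + (t - s) * H 0 t) ∧ (st → 0 < s → 0 < H 0 0) := by
  have hcont : ∀ k ≤ n, ∀ t, Continuous fun u : ℝ => u^k * G (k+1) (s + u*(t-s)) := by
    intro k hk t
    have := h.cont (k+1) (by omega)
    fun_prop
  have hpos : st → ∀ k ≤ n, ∀ t ∈ Set.Icc 0 b, (0 < t ∨ 0 < s) →
      0 < ∫ u in (0:ℝ)..1, u^k * G (k+1) (s + u*(t-s)) := by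
    intro hst k hk t ht hts
    apply intervalIntegral.intervalIntegral_pos_of_pos_on ((hcont k hk t).intervalIntegrable _ _)
      _ one_pos
    intro u hu
    refine mul_pos (pow_pos hu.1 k) (h.pos hst _ (by omega) _ ⟨?_, ?_⟩)
    · have h1 := hu.1
      have h2 := sub_pos.2 hu.2
      rcases hts with h3 | h3
      · nlinarith [mul_pos h1 h3, mul_nonneg h2.le hs.1]
      · nlinarith [mul_pos h2 h3, mul_nonneg h1.le ht.1]
    · nlinarith [mul_nonneg hu.1.le (sub_nonneg.2 ht.2), mul_nonneg (sub_pos.2 hu.2).le (sub_nonneg.2 hs.2)]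
  refine ⟨fun k t => ∫ u in (0:ℝ)..1, u^k * G (k+1) (s + u*(t-s)), ⟨?_, ?_, ?_, ?_⟩, ?_, ?_⟩
  · intro k hk t
    exact param_hasDeriv k s _ _ (h.der (k+1) (by omega)) (h.cont _ (by omega)) t
  · intro k hk
    have := h.cont (k+1) (by omega)
    apply intervalIntegral.continuous_parametric_intervalIntegral_of_continuous' 
    unfold Function.uncurry
    fun_prop
  · intro k hk t ht
    apply intervalIntegral.integral_nonneg zero_le_one
    intro u hu
    refine mul_nonneg (pow_nonneg hu.1 k) (h.nonneg _ (by omega) _ ⟨?_, ?_⟩)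
    · nlinarith [mul_nonneg hu.1 ht.1, mul_nonneg (sub_nonneg.2 hu.2) hs.1]
    · nlinarith [mul_nonneg hu.1 (sub_nonneg.2 ht.2), mul_nonneg (sub_nonneg.2 hu.2) (sub_nonneg.2 hs.2)]
  · intro hst k hk t ht
    exact hpos hst k hk t ⟨ht.1.le, ht.2⟩ (Or.inl ht.1)
  · intro t
    have h1 : ∀ u ∈ Set.uIcc (0:ℝ) 1, HasDerivAt (fun u => G 0 (s + u*(t-s)))
        ((t-s) * (G 1 (s+u*(t-s)))) u := by
      intro u _
      have h1 : HasDerivAt (fun u => s + u * (t - s)) (t-s) u := by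
        simpa using (((hasDerivAt_id u)).mul_const (t-s)).const_add s
      have := (h.der 0 (by omega) (s + u*(t-s))).comp u h1
      exact this.congr_deriv (by ring)
    have h2 := intervalIntegral.integral_eq_sub_of_hasDerivAt h1 (by
      have := h.cont 1 (by omega)
      exact (by fun_prop : Continuous _).intervalIntegrable _ _)
    simp only [intervalIntegral.integral_const_mul] at h2
    simp only [pow_zero, one_mul, zero_add]
    rw [h2]
    simp
  · intro hst hs0
    exact hpos hst 0 (by omega) 0 ⟨le_rfl, hs.1.trans hs.2⟩ (Or.inr hs0)

lemma AMSeq.newton {n : ℕ} : ∀ {b : ℝ} {st : Prop} {G : ℕ → ℝ → ℝ} (_ : AMSeq n b st G)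
    {s : ℕ → ℝ} (_ : ∀ j, s j ∈ Set.Icc 0 b),
    ∃ (c : ℕ → ℝ) (r : ℝ → ℝ), (∀ k, 0 ≤ c k) ∧ (∀ t ∈ Set.Icc 0 b, 0 ≤ r t) ∧
      (st → ∀ t ∈ Set.Ioc 0 b, 0 < r t) ∧ (st → 1 ≤ n → 0 < s (n-1) → 0 < r 0) ∧
      ∀ t, G 0 t = ∑ k ∈ Finset.range n, c k * ∏ j ∈ Finset.range k, (t - s j)
        + (∏ j ∈ Finset.range n, (t - s j)) * r t := by
  induction n with
  | zero =>
    intro b st G h s hs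
    refine ⟨fun _ => 0, G 0, fun _ => le_rfl, h.nonneg 0 le_rfl, fun hst => h.pos hst 0 le_rfl,
      fun _ h => absurd h (by omega), ?_⟩
    simp
  | succ n ih =>
    intro b st G h s hs
    obtain ⟨H, hH, h0, hp⟩ := h.step (hs 0)
    obtain ⟨c, r, h1, h2, h3, h4, h5⟩ := ih hH (s := fun j => s (j+1)) (fun j => hs _)
    refine ⟨fun k => Nat.casesOn k (G 0 (s 0)) c, r, ?_, h2, h3, ?_, ?_⟩
    · rintro (_ | k)
      · exact h.nonneg 0 (by omega) _ (hs 0)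
      · exact h1 k
    · intro hst _ hsn
      rcases n with _ | n
      · have := h5 0
        simp at this
        rw [← this]
        exact hp hst hsn
      · exact h4 hst (by omega) hsn
    · intro t
      rw [h0, h5, Finset.sum_range_succ', Finset.prod_range_succ']
      simp only [Finset.prod_range_succ', Finset.prod_range_zero]
      have : ∀ x : ℕ, c x * ((∏ k ∈ Finset.range x, (t - s (k + 1))) * (t - s 0))
        = (t - s 0) * (c x * ((∏ k ∈ Finset.range x, (t - s (k + 1))))) := fun x => by ring
      simp only [this, ← Finset.mul_sum]
      show _ = _ + G 0 (s 0) * 1 + _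
      ring

lemma extend_seq (n : ℕ) : ∀ (b : ℝ) (_ : 0 ≤ b) (f : ℕ → ℝ → ℝ)
    (_ : ∀ k < n, ∀ t ∈ Set.Ioo 0 b, HasDerivAt (f k) (f (k+1) t) t)
    (_ : ∀ k ≤ n, ContinuousOn (f k) (Set.Icc 0 b)),
    ∃ G : ℕ → ℝ → ℝ, (∀ k < n, ∀ t, HasDerivAt (G k) (G (k+1) t) t) ∧
      (∀ k ≤ n, Continuous (G k)) ∧ ∀ k ≤ n, ∀ t ∈ Set.Icc 0 b, G k t = f k t := by
  induction n with
  | zero =>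
    intro b hb f _ hc
    refine ⟨fun _ => Set.IccExtend hb ((Set.Icc 0 b).domRestrict (f 0)), by simp, ?_, ?_⟩
    · intro k _
      exact (hc 0 le_rfl).domRestrict.Icc_extend'
    · intro k hk t ht
      obtain rfl : k = 0 := by omega
      exact Set.IccExtend_of_mem hb _ ht
  | succ n ih =>
    intro b hb f hd hc
    obtain ⟨G, h1, h2, h3⟩ := ih b hb (fun k => f (k+1)) (fun k hk => hd _ (by omega))
      (fun k hk => hc _ (by omega))
    have hder : ∀ t, HasDerivAt (fun t => f 0 0 + ∫ x in (0:ℝ)..t, G 0 x) (G 0 t) t := by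
      intro t
      exact (intervalIntegral.integral_hasDerivAt_right ((h2 0 (by omega)).intervalIntegrable _ _)
        (h2 0 (by omega)).aestronglyMeasurable.stronglyMeasurableAtFilter
        (h2 0 (by omega)).continuousAt).const_add _
    refine ⟨fun k => Nat.casesOn k (fun t => f 0 0 + ∫ x in (0:ℝ)..t, G 0 x) G, ?_, ?_, ?_⟩
    · rintro (_ | k) hk t
      · exact hder t
      · exact h1 k (by omega) t
    · rintro (_ | k) hk
      · exact continuous_iff_continuousAt.2 fun t => (hder t).continuousAt
      · exact h2 k (by omega)
    · rintro (_ | k) hk t ht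
      · have := intervalIntegral.integral_eq_sub_of_hasDeriv_right_of_le (f := f 0) (f' := G 0) ht.1
          ((hc 0 (by omega)).mono (Set.Icc_subset_Icc_right ht.2)) (fun x hx => by
            have hx' : x ∈ Set.Ioo 0 b := ⟨hx.1, hx.2.trans_le ht.2⟩
            rw [h3 0 (by omega) x ⟨hx'.1.le, hx'.2.le⟩]
            exact (hd 0 (by omega) x hx').hasDerivWithinAt)
          ((h2 0 (by omega)).intervalIntegrable _ _)
        show f 0 0 + ∫ x in (0:ℝ)..t, G 0 x = f 0 t
        rw [this]
        ring
      · exact h3 k (by omega) t ht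

lemma exists_AMSeq {n : ℕ} {g : ℝ → ℝ} {b : ℝ} (hb0 : 0 ≤ b) (hb : b < 1)
    (hg : ContDiffOn ℝ n g (Set.Ico 0 1))
    (hmon : ∀ k ≤ n, ∀ t ∈ Set.Ico (0 : ℝ) 1, 0 ≤ iteratedDerivWithin k g (Set.Ico 0 1) t) :
    ∃ G, AMSeq n b (∀ k ≤ n, ∀ t ∈ Set.Ioo (0 : ℝ) 1,
        0 < iteratedDerivWithin k g (Set.Ico 0 1) t) G ∧ ∀ t ∈ Set.Icc 0 b, G 0 t = g t := by
  have hsub : Set.Icc 0 b ⊆ Set.Ico 0 1 := fun t ht => ⟨ht.1, ht.2.trans_lt hb⟩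
  obtain ⟨G, h1, h2, h3⟩ := extend_seq n b hb0 (fun k => iteratedDerivWithin k g (Set.Ico 0 1))
    (fun k hk t ht => by
      have h := hg.differentiableOn_iteratedDerivWithin (m := k) (by exact_mod_cast hk)
        (uniqueDiffOn_Ico 0 1) t (hsub ⟨ht.1.le, ht.2.le⟩)
      have h2 := h.hasDerivWithinAt
      rw [← iteratedDerivWithin_succ] at h2
      exact h2.hasDerivAt (Ico_mem_nhds ht.1 (ht.2.trans hb)))
    (fun k hk => (hg.continuousOn_iteratedDerivWithin (by exact_mod_cast hk)
        (uniqueDiffOn_Ico 0 1)).mono hsub)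
  refine ⟨G, ⟨h1, h2, ?_, ?_⟩, ?_⟩
  · intro k hk t ht
    rw [h3 k hk t ht]
    exact hmon k hk t (hsub ht)
  · intro hst k hk t ht
    rw [h3 k hk t ⟨ht.1.le, ht.2⟩]
    exact hst k hk t ⟨ht.1, ht.2.trans_lt hb⟩
  · intro t ht
    simpa using h3 0 (by omega) t ht

inductive PCone (D : ℕ) : (ℝ → ℝ) → Prop
  | zero : PCone D (fun _ => 0)
  | basic (a : ℝ) (k : ℤ) (ha : 0 ≤ a) (hk : k.natAbs ≤ D) : PCone D (fun θ => a * cos (2 * k * θ))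
  | add (f g : ℝ → ℝ) (hf : PCone D f) (hg : PCone D g) : PCone D (fun θ => f θ + g θ)

lemma PCone.mono {D E : ℕ} (h : D ≤ E) {f : ℝ → ℝ} (hf : PCone D f) : PCone E f := by
  induction hf with
  | zero => exact .zero
  | basic a k ha hk => exact .basic a k ha (hk.trans h)
  | add f g _ _ h1 h2 => exact .add f g h1 h2

lemma PCone.mul {D E : ℕ} {f g : ℝ → ℝ} (hf : PCone D f) (hg : PCone E g) :
    PCone (D + E) (fun θ => f θ * g θ) := by
  induction hf with
  | zero => simpa using PCone.zero
  | add f f' _ _ h1 h2 =>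
    have := PCone.add _ _ h1 h2
    simpa only [add_mul] using this
  | basic a k ha hk =>
    induction hg with
    | zero => simpa using PCone.zero
    | add g g' _ _ h1 h2 =>
      have := PCone.add _ _ h1 h2
      simpa only [mul_add] using this
    | basic b j hb hj =>
      have := PCone.add _ _ (PCone.basic (D := D + E) (a * b / 2) (k + j) (by positivity) (by omega))
        (PCone.basic (D := D + E) (a * b / 2) (k - j) (by positivity) (by omega))
      convert this using 2 with θ
      push_cast
      rw [show 2 * ((k:ℝ) + j) * θ = 2 * k * θ + 2 * j * θ by ring,
        show 2 * ((k:ℝ) - j) * θ = 2 * k * θ - 2 * j * θ by ring, cos_add, cos_sub]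
      ring

lemma PCone.const {D : ℕ} (a : ℝ) (ha : 0 ≤ a) : PCone D (fun _ => a) := by
  simpa using PCone.basic (D := D) a 0 ha (by simp)

lemma PCone.smul {D : ℕ} {f : ℝ → ℝ} (hf : PCone D f) (a : ℝ) (ha : 0 ≤ a) :
    PCone D (fun θ => a * f θ) := by
  simpa using (PCone.const (D := 0) a ha).mul hf

lemma PCone.sum {D : ℕ} (f : ℕ → ℝ → ℝ) (n : ℕ) (hf : ∀ k < n, PCone D (f k)) :
    PCone D (fun θ => ∑ k ∈ Finset.range n, f k θ) := by
  induction n with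
  | zero => simpa using PCone.zero
  | succ n ih =>
    simp only [Finset.sum_range_succ]
    exact .add _ _ (ih fun k hk => hf k (by omega)) (hf n (by omega))

/-- symmetric q-binomials -/
noncomputable def qb (α : ℝ) (n k : ℕ) : ℝ :=
  ∏ i ∈ Finset.range k, sin (((n:ℝ) - i) * α) / sin (((i:ℝ) + 1) * α)

lemma qb_nonneg {N : ℕ} (hN : 0 < N) {n k : ℕ} (hk : k ≤ n) (hn : n ≤ N) : 0 ≤ qb (π / N) n k := by
  have hN' : (0:ℝ) < N := by exact_mod_cast hN
  have key : ∀ x : ℝ, 0 ≤ x → x ≤ N → 0 ≤ sin (x * (π / N)) := by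
    intro x h0 h1
    apply sin_nonneg_of_nonneg_of_le_pi (by positivity)
    rw [← mul_div_assoc, div_le_iff₀ hN', mul_comm]
    gcongr
  refine Finset.prod_nonneg fun i hi => ?_
  have hi' := Finset.mem_range.1 hi
  have h1 : (i:ℝ) + 1 ≤ n := by exact_mod_cast (by omega : i + 1 ≤ n)
  have h2 : (n:ℝ) ≤ N := by exact_mod_cast hn
  have h3 : (0:ℝ) ≤ i := by positivity
  exact div_nonneg (key _ (by linarith) (by linarith)) (key _ (by linarith) (by linarith))

lemma qb_zero_of_lt (α : ℝ) {n k : ℕ} (h : n < k) : qb α n k = 0 :=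
  Finset.prod_eq_zero (Finset.mem_range.2 h) (by simp)

lemma qb_succ (α : ℝ) (n k : ℕ) :
    qb α n (k+1) = qb α n k * (sin (((n:ℝ) - k) * α) / sin (((k:ℝ) + 1) * α)) :=
  Finset.prod_range_succ _ _

lemma qb_shift (α : ℝ) (n k : ℕ) :
    qb α (n+2) (k+2) = qb α n k * (sin (((n:ℝ) + 2) * α) * sin (((n:ℝ) + 1) * α) /
      (sin (((k:ℝ) + 1) * α) * sin (((k:ℝ) + 2) * α))) := by
  simp only [qb, Finset.prod_div_distrib]
  rw [Finset.prod_range_succ', Finset.prod_range_succ', Finset.prod_range_succ _ (k+1),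
    Finset.prod_range_succ _ k]
  push_cast
  rw [show (k:ℝ) + 1 + 1 = k + 2 by ring]
  have e : ∀ x : ℕ, (n:ℝ) + 2 - (x + 1 + 1) = n - x := fun x => by ring
  simp only [e]
  rw [show (n:ℝ) + 2 - 1 = n + 1 by ring, show (n:ℝ) + 2 - 0 = n + 2 by ring]
  ring

lemma qb_rec (α : ℝ) (n k : ℕ) (h1 : sin (((k:ℝ) + 1) * α) ≠ 0) (h2 : sin (((k:ℝ) + 2) * α) ≠ 0) :
    qb α (n+2) (k+2) = qb α n k + 2 * cos (((n:ℝ) + 1) * α) * qb α n (k+1) + qb α n (k+2) := by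
  rw [qb_shift α n k, qb_succ α n (k+1), qb_succ α n k]
  push_cast
  rw [show (k:ℝ) + 1 + 1 = k + 2 by ring]
  have key : sin (((n:ℝ) + 2) * α) * sin (((n:ℝ) + 1) * α) =
    sin (((k:ℝ) + 1) * α) * sin (((k:ℝ) + 2) * α) +
     2 * cos (((n:ℝ)+1) * α) * sin (((n:ℝ) - k) * α) * sin (((k:ℝ)+2) * α) +
     sin (((n:ℝ)-k)*α) * sin (((n:ℝ) - (k + 1))*α) := by
    rw [show ((n:ℝ) + 2) * α = α * k + α * (n - k) + 2 * α by ring,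
      show ((n:ℝ) + 1) * α = α * k + α * (n - k) + α by ring,
      show ((k:ℝ) + 1) * α = α * k + α by ring,
      show ((k:ℝ) + 2) * α = α * k + 2 * α by ring,
      show ((n:ℝ) - (k + 1)) * α = α * (n - k) - α by ring,
      show ((n:ℝ) - k) * α = α * (n - k) by ring]
    generalize α * (k:ℝ) = x
    generalize α * ((n:ℝ) - k) = y
    have ss : ∀ A B C D : ℝ, C = A - B → D = A + B → sin A * sin B = (cos C - cos D) / 2 := by
      rintro A B C D rfl rfl
      rw [cos_sub, cos_add]; ring
    have cc : ∀ A B C D : ℝ, C = A - B → D = A + B → cos A * cos B = (cos C + cos D) / 2 := by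
      rintro A B C D rfl rfl
      rw [cos_sub, cos_add]; ring
    have i1 := ss (x + y + 2*α) (x+y+α) α (2*x+2*y+3*α) (by ring) (by ring)
    have i2 := ss (x + 2*α) (x+α) α (2*x+3*α) (by ring) (by ring)
    have i3 := ss (x + 2*α) y (x + 2*α-y) (x+2*α+y) (by ring) (by ring)
    have i4 := ss y (y-α) α (2*y-α) (by ring) (by ring)
    have i5 := cc (x+2*α-y) (x+y+α) (α - 2*y) (2*x+3*α) (by ring) (by ring)
    have i6 := cc (x+2*α+y) (x+y+α) α (2*x+2*y+3*α) (by ring) (by ring)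
    have i7 : cos (α - 2*y) = cos (2*y-α) := by rw [← cos_neg]; congr 1; ring
    rw [i7] at i5
    linear_combination i1 - i2 - i4 - 2 * cos (x+y+α) * i3 - i5 + i6
  rw [key]
  generalize sin (((k:ℝ) + 1) * α) = S1 at *
  generalize sin (((k:ℝ) + 2) * α) = S2 at *
  field_simp

noncomputable def qF (α : ℝ) (n : ℕ) (θ : ℝ) : ℝ :=
  ∑ k ∈ Finset.range (n+1), qb α n k * cos ((2 * (k:ℝ) - n) * θ)

lemma qF_rec {N n : ℕ} (hn : n + 2 < N) (θ : ℝ) :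
    qF (π / N) (n+2) θ = (2 * cos (2 * θ) + 2 * cos (((n:ℝ) + 1) * (π / N))) * qF (π / N) n θ := by
  set α := π / N with hα
  have hN' : (0:ℝ) < N := by exact_mod_cast (by omega : 0 < N)
  have key : ∀ x : ℝ, 0 < x → x < N → sin (x * α) ≠ 0 := by
    intro x h0 h1
    apply ne_of_gt
    apply sin_pos_of_pos_of_lt_pi (by positivity)
    rw [hα, ← mul_div_assoc, div_lt_iff₀ hN', mul_comm]
    gcongr
  set C : ℕ → ℝ := fun k => cos ((2 * (k:ℝ) - (n + 2)) * θ) with hC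
  set β := 2 * cos (((n:ℝ) + 1) * α) with hβ
  have e1 : qb α (n+2) 1 = β * qb α n 0 + qb α n 1 := by
    have h1 : sin α ≠ 0 := by simpa using key 1 one_pos (by exact_mod_cast (by omega : 1 < N))
    simp [qb, hβ]
    field_simp
    rw [show ((n:ℝ)+2) * α = α * (n+1) + α by ring, show (n:ℝ) * α = α * (n+1) - α by ring,
      sin_add, sin_sub]
    ring
  have e0 : qb α (n+2) 0 = qb α n 0 := by simp [qb]
  have e2 : ∀ k ∈ Finset.range (n+1), qb α (n+2) (k+2) * C (k+2) =
      (qb α n k + β * qb α n (k+1) + qb α n (k+2)) * C (k+2) := by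
    intro k hk
    have hk' := Finset.mem_range.1 hk
    have h3 : (k:ℝ) + 2 < N := by exact_mod_cast (by omega : k + 2 < N)
    have h4 : (0:ℝ) ≤ k := by positivity
    rw [qb_rec α n k (key _ (by linarith) (by linarith)) (key _ (by linarith) (by linarith))]
  have e3 : ∀ k, (2 * cos (2 * θ) + β) * (qb α n k * cos ((2 * (k:ℝ) - n) * θ)) =
      qb α n k * C k + β * (qb α n k * C (k+1)) + qb α n k * C (k+2) := by
    intro k
    simp only [hC]
    push_cast
    rw [show (2 * (k:ℝ) - (n+2)) * θ = (2 * (k:ℝ) - n) * θ - 2 * θ by ring,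
      show (2 * ((k:ℝ)+1) - (n+2)) * θ = (2 * (k:ℝ) - n) * θ by ring,
      show (2 * ((k:ℝ)+2) - (n+2)) * θ = (2 * (k:ℝ) - n) * θ + 2 * θ by ring, cos_sub, cos_add]
    ring
  have z1 := qb_zero_of_lt α (show n < n + 1 by omega)
  have z2 := qb_zero_of_lt α (show n < n + 2 by omega)
  have s1 : ∑ k ∈ Finset.range (n+1), qb α n (k+1) * C (k+2) + qb α n 0 * C 1
      = ∑ k ∈ Finset.range (n+1), qb α n k * C (k+1) := by
    rw [← Finset.sum_range_succ' (fun k => qb α n k * C (k+1)), Finset.sum_range_succ, z1]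
    simp
  have s2 : ∑ k ∈ Finset.range (n+1), qb α n (k+2) * C (k+2) + qb α n 1 * C 1 + qb α n 0 * C 0
      = ∑ k ∈ Finset.range (n+1), qb α n k * C k := by
    rw [← Finset.sum_range_succ' (fun k => qb α n (k+1) * C (k+1)),
      ← Finset.sum_range_succ' (fun k => qb α n k * C k), Finset.sum_range_succ,
      Finset.sum_range_succ, z1, z2]
    simp
  have lhs : qF α (n+2) θ = ∑ k ∈ Finset.range (n+3), qb α (n+2) k * C k := by
    simp only [qF, hC]
    push_cast
    rfl
  rw [lhs, Finset.sum_range_succ', Finset.sum_range_succ', Finset.sum_congr rfl e2, e0, 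
    show 0 + 1 = 1 from rfl, e1, qF, Finset.mul_sum, Finset.sum_congr rfl (fun k _ => e3 k)]
  simp only [add_mul, Finset.sum_add_distrib, ← Finset.mul_sum, mul_assoc]
  rw [← s1, ← s2]
  ring

noncomputable def tau (N l : ℕ) : ℝ := cos ((((N / 2 : ℕ) : ℝ) - l) * (π / N)) ^ 2

lemma four_sub_tau (N l : ℕ) (θ : ℝ) : 4 * (cos θ ^ 2 - tau N l) =
    2 * cos (2 * θ) - 2 * cos (2 * ((((N / 2 : ℕ) : ℝ) - l) * (π / N))) := by
  rw [tau, cos_two_mul, cos_two_mul]; ring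

lemma prod_odd {N m : ℕ} (hN : N = 2 * m + 1) (θ : ℝ) (l : ℕ) (hl : l ≤ m) :
    ∏ i ∈ Finset.range l, (cos θ ^ 2 - tau N i) = (1/4)^l * qF (π / N) (2 * l) θ := by
  induction l with
  | zero => simp [qF, qb]
  | succ l ih =>
    have hN' : (N:ℝ) ≠ 0 := by exact_mod_cast (by omega : N ≠ 0)
    rw [Finset.prod_range_succ, ih (by omega), show 2 * (l+1) = 2 * l + 2 by ring,
      qF_rec (by omega)]
    have h := four_sub_tau N l θ
    rw [show 2 * ((((N / 2 : ℕ) : ℝ) - l) * (π / N)) = π - (((2 * l : ℕ) : ℝ) + 1) * (π / N) by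
      rw [show N / 2 = m by omega]
      have : (N:ℝ) = 2 * m + 1 := by exact_mod_cast hN
      field_simp
      rw [this]; push_cast; ring, cos_pi_sub] at h
    rw [pow_succ]
    linear_combination (1/4)^l * qF (π/N) (2*l) θ * (1/4) * h

lemma prod_even {N m : ℕ} (hN : N = 2 * m) (θ : ℝ) (l : ℕ) (hl : l + 1 ≤ m) :
    ∏ i ∈ Finset.range (l+1), (cos θ ^ 2 - tau N i) =
      (1/4)^l * (1/2) * (cos θ * qF (π / N) (2 * l + 1) θ) := by
  have hN' : (N:ℝ) ≠ 0 := by exact_mod_cast (by omega : N ≠ 0)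
  have hNm : (N:ℝ) = 2 * m := by exact_mod_cast hN
  induction l with
  | zero =>
    have h0 : tau N 0 = 0 := by
      rw [tau, show (((N / 2 : ℕ) : ℝ) - (0:ℕ)) * (π / N) = π / 2 by
        rw [show N / 2 = m by omega]
        field_simp
        rw [hNm]; push_cast; ring]
      simp
    have h1 : sin (π / N) ≠ 0 := by
      apply ne_of_gt
      apply sin_pos_of_pos_of_lt_pi (by positivity)
      rw [div_lt_iff₀ (by positivity)]
      have : (1:ℝ) < N := by exact_mod_cast (by omega : 1 < N)
      nlinarith [pi_pos]
    simp [qF, qb, h0, Finset.sum_range_succ, div_self h1]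
    rw [show (2 - 1) * θ = θ by ring]
    ring
  | succ l ih =>
    rw [Finset.prod_range_succ, ih (by omega), show 2 * (l+1) + 1 = 2 * l + 1 + 2 by ring,
      qF_rec (by omega)]
    have h := four_sub_tau N (l+1) θ
    rw [show 2 * ((((N / 2 : ℕ) : ℝ) - (l+1:ℕ)) * (π / N)) =
        π - (((2 * l + 1 : ℕ) : ℝ) + 1) * (π / N) by
      rw [show N / 2 = m by omega]
      field_simp
      rw [hNm]; push_cast; ring, cos_pi_sub] at h
    rw [pow_succ]
    linear_combination (1/4)^l * (1/2) * cos θ * qF (π/N) (2*l+1) θ * (1/4) * h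

lemma pcone_prod {N : ℕ} (hN : 4 ≤ N) (l : ℕ) (hl : l ≤ N / 2) :
    PCone l (fun θ => ∏ i ∈ Finset.range l, (cos θ ^ 2 - tau N i)) := by
  rcases Nat.even_or_odd' N with ⟨m, hm | hm⟩
  · rcases l with _ | l
    · simpa using PCone.const (D := 0) 1 zero_le_one
    · simp only [fun θ => prod_even hm θ l (by omega)]
      refine PCone.smul ?_ _ (by positivity)
      simp only [qF, Finset.mul_sum]
      refine PCone.sum _ _ fun k hk => ?_
      have hq := qb_nonneg (N := N) (by omega) (show k ≤ 2 * l + 1 by omega) (by omega)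
      have := PCone.add _ _ (PCone.basic (D := l+1) (qb (π/N) (2*l+1) k * (1/2)) (k - l) (by positivity) (by omega))
        (PCone.basic (D := l+1) (qb (π/N) (2*l+1) k * (1/2)) (k - l - 1) (by positivity) (by omega))
      convert this using 2 with θ
      push_cast
      rw [show 2 * ((k:ℝ) - l) * θ = (2 * k - (2 * l + 1)) * θ + θ by ring,
        show 2 * ((k:ℝ) - l - 1) * θ = (2 * k - (2 * l + 1)) * θ - θ by ring, cos_add, cos_sub]
      ring
  · simp only [fun θ => prod_odd hm θ l (by omega)]
    refine PCone.smul ?_ _ (by positivity)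
    refine PCone.sum _ _ fun k hk => ?_
    have hq := qb_nonneg (N := N) (by omega) (show k ≤ 2 * l by omega) (by omega)
    have := (PCone.basic (D := l) (qb (π/N) (2*l) k) (k - l) hq (by omega))
    convert this using 3 with θ
    push_cast
    congr 1
    ring

lemma sum_sum_cos {N : ℕ} (x : Fin N → ℝ) (k : ℝ) :
    ∑ i, ∑ j, cos (2 * k * (x i - x j)) =
      (∑ i, cos (2 * k * x i)) ^ 2 + (∑ i, sin (2 * k * x i)) ^ 2 := by
  rw [sq, sq, Finset.sum_mul_sum, Finset.sum_mul_sum, ← Finset.sum_add_distrib]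
  refine Finset.sum_congr rfl fun i _ => ?_
  rw [← Finset.sum_add_distrib]
  refine Finset.sum_congr rfl fun j _ => ?_
  rw [mul_sub, cos_sub]

lemma sum_roots {N : ℕ} (hN : 0 < N) (k : ℤ) (hk0 : k ≠ 0) (hk : k.natAbs < N) :
    ∑ i : Fin N, cos (2 * k * ((i:ℕ) * π / N)) = 0 ∧
    ∑ i : Fin N, sin (2 * k * ((i:ℕ) * π / N)) = 0 := by
  have hN' : (N:ℂ) ≠ 0 := by exact_mod_cast hN.ne'
  set ω : ℂ := Complex.exp (2 * k * π / N * Complex.I) with hω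
  have h1 : ω ≠ 1 := by
    intro h
    rw [hω, Complex.exp_eq_one_iff] at h
    obtain ⟨n, hn⟩ := h
    have hpi : (π:ℂ) ≠ 0 := by exact_mod_cast pi_ne_zero
    have hI := Complex.I_ne_zero
    field_simp at hn
    have hn' : k = N * n := by exact_mod_cast hn
    have : (N:ℤ) ∣ k := ⟨n, hn'⟩
    have := Int.natAbs_dvd_natAbs.2 this
    have := Nat.le_of_dvd (by omega) this
    simp at this
    omega
  have h2 : ω ^ N = 1 := by
    rw [hω, ← Complex.exp_nat_mul, Complex.exp_eq_one_iff]
    exact ⟨k, by field_simp⟩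
  have h3 : ∑ i : Fin N, ω ^ (i:ℕ) = 0 := by
    rw [Fin.sum_univ_eq_sum_range (fun i => ω ^ i)]
    have := geom_sum_eq h1 N
    rw [this, h2]; simp
  have h4 : ∀ i : Fin N, ω ^ (i:ℕ) = (cos (2 * k * ((i:ℕ) * π / N)) : ℝ) +
      (sin (2 * k * ((i:ℕ) * π / N)) : ℝ) * Complex.I := by
    intro i
    rw [hω, ← Complex.exp_nat_mul, Complex.ofReal_cos, Complex.ofReal_sin, ← Complex.exp_mul_I]
    congr 1
    push_cast
    ring
  simp only [h4, Finset.sum_add_distrib, ← Finset.sum_mul, ← Complex.ofReal_sum] at h3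
  have hre := congrArg Complex.re h3
  have him := congrArg Complex.im h3
  simp [-Complex.ofReal_sum] at hre him
  exact ⟨hre, him⟩

lemma PCone.energy {D N : ℕ} (hN : 0 < N) (hD : D < N) {f : ℝ → ℝ} (hf : PCone D f) (x : Fin N → ℝ) :
    ∑ i : Fin N, ∑ j : Fin N, f ((i:ℕ) * π / N - (j:ℕ) * π / N) ≤
      ∑ i, ∑ j, f (x i - x j) := by
  induction hf with
  | zero => simp
  | add f g _ _ h1 h2 =>
    simp only [Finset.sum_add_distrib]
    exact add_le_add h1 h2
  | basic a k ha hk =>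
    simp only [← Finset.mul_sum]
    apply mul_le_mul_of_nonneg_left _ ha
    by_cases hk0 : k = 0
    · simp [hk0]
    · obtain ⟨h1, h2⟩ := sum_roots hN k hk0 (by omega)
      rw [sum_sum_cos (fun i : Fin N => (i:ℕ) * π / N), sum_sum_cos, h1, h2]
      simp
      positivity

lemma hc_tau {N : ℕ} (hN : 4 ≤ N) (i j : ℕ) (hi : i < N) (hj : j < i) :
    ∃ l < N / 2, cos ((i:ℝ) * π / N - (j:ℝ) * π / N) ^ 2 = tau N l := by
  have hN' : (N:ℝ) ≠ 0 := by exact_mod_cast (by omega : N ≠ 0)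
  by_cases h : i - j ≤ N / 2
  · refine ⟨N / 2 - (i - j), by omega, ?_⟩
    rw [tau]
    congr 2
    rw [Nat.cast_sub h, Nat.cast_sub hj.le]
    ring
  · refine ⟨N / 2 - (N - (i - j)), by omega, ?_⟩
    rw [tau, show (((N / 2 : ℕ):ℝ) - ((N / 2 - (N - (i - j)) : ℕ):ℝ)) * (π / N) =
      π - ((i:ℝ) * π / N - (j:ℝ) * π / N) by
        rw [Nat.cast_sub (by omega), Nat.cast_sub (by omega), Nat.cast_sub hj.le]
        field_simp
        ring, cos_pi_sub, neg_sq]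

lemma hc_tau' {N : ℕ} (hN : 4 ≤ N) (i j : Fin N) (h : i ≠ j) :
    ∃ l < N / 2, cos (((i:ℕ):ℝ) * π / N - ((j:ℕ):ℝ) * π / N) ^ 2 = tau N l := by
  rcases lt_or_gt_of_ne h with h | h
  · obtain ⟨l, hl, h2⟩ := hc_tau hN j i j.2 h
    refine ⟨l, hl, ?_⟩
    rw [← h2, ← cos_neg, neg_sub]
  · exact hc_tau hN i j i.2 h

lemma tau_bounds {N l : ℕ} (hN : 4 ≤ N) (hl : l < N / 2) : tau N l < 1 := by
  have hN' : (0:ℝ) < N := by exact_mod_cast (by omega : 0 < N)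
  have hs : 0 < sin ((((N / 2 : ℕ) : ℝ) - l) * (π / N)) := by
    have h1 : (0:ℝ) < ((N / 2 : ℕ) : ℝ) - l := by
      rw [sub_pos]; exact_mod_cast hl
    have h2 : ((N / 2 : ℕ) : ℝ) < N := by exact_mod_cast (by omega : N / 2 < N)
    have h3 : (0:ℝ) ≤ l := by positivity
    apply sin_pos_of_pos_of_lt_pi (by positivity)
    rw [← mul_div_assoc, div_lt_iff₀ hN', mul_comm]
    have : ((N / 2 : ℕ) : ℝ) - l < N := by linarith
    gcongr
  rw [tau, cos_sq']
  nlinarith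

lemma tau_last_pos {N : ℕ} (hN : 4 ≤ N) : 0 < tau N (N / 2 - 1) := by
  have hN' : (0:ℝ) < N := by exact_mod_cast (by omega : 0 < N)
  have h4 : (4:ℝ) ≤ N := by exact_mod_cast hN
  rw [tau, Nat.cast_sub (by omega), Nat.cast_one, sub_sub_cancel, one_mul]
  refine pow_pos (cos_pos_of_mem_Ioo ⟨?_, ?_⟩) 2
  · have : 0 < π / N := by positivity
    linarith [pi_pos]
  · gcongr; linarith

lemma fin_bound {ι : Type} [Finite ι] (f : ι → ℝ) (hf : ∀ i, f i < 1) :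
    ∃ b, 0 ≤ b ∧ b < 1 ∧ ∀ i, f i ≤ b := by
  cases nonempty_fintype ι
  rcases isEmpty_or_nonempty ι with h | h
  · exact ⟨0, le_rfl, one_pos, fun i => (h.false i).elim⟩
  · obtain ⟨i, hi⟩ := Finite.exists_max f
    exact ⟨max 0 (f i), le_max_left _ _, max_lt one_pos (hf i), fun j => (hi j).trans (le_max_right _ _)⟩

lemma prod_nodes (N : ℕ) (s : ℕ → ℝ) (hs : ∀ j < 2 * (N / 2), s j = tau N (j / 2)) (t : ℝ) (l : ℕ)
    (hl : l ≤ N / 2) : ∏ j ∈ Finset.range (2 * l), (t - s j) =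
      (∏ i ∈ Finset.range l, (t - tau N i)) * (∏ i ∈ Finset.range l, (t - tau N i)) := by
  induction l with
  | zero => simp
  | succ l ih =>
    rw [show 2 * (l+1) = 2 * l + 1 + 1 by ring, Finset.prod_range_succ, Finset.prod_range_succ,
      ih (by omega), Finset.prod_range_succ, hs _ (by omega), hs _ (by omega),
      show 2 * l / 2 = l by omega, show (2 * l + 1) / 2 = l by omega]
    ring

lemma pcone_nodes {N : ℕ} (hN : 4 ≤ N) (s : ℕ → ℝ) (hs : ∀ j < 2 * (N / 2), s j = tau N (j / 2))
    (k : ℕ) (hk : k < 2 * (N / 2)) :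
    PCone k (fun θ => ∏ j ∈ Finset.range k, (cos θ ^ 2 - s j)) := by
  rcases Nat.even_or_odd' k with ⟨l, hl | hl⟩
  · subst hl
    simp only [fun θ => prod_nodes N s hs (cos θ ^ 2) l (by omega)]
    exact ((pcone_prod hN l (by omega)).mul (pcone_prod hN l (by omega))).mono (by omega)
  · subst hl
    have : ∀ θ, ∏ j ∈ Finset.range (2 * l + 1), (cos θ ^ 2 - s j) =
      (∏ i ∈ Finset.range l, (cos θ ^ 2 - tau N i)) *
        (∏ i ∈ Finset.range (l+1), (cos θ ^ 2 - tau N i)) := by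
      intro θ
      rw [Finset.prod_range_succ, prod_nodes N s hs (cos θ ^ 2) l (by omega),
        Finset.prod_range_succ, hs (2 * l) (by omega), show 2 * l / 2 = l by omega]
      ring
    simp only [this]
    exact ((pcone_prod hN l (by omega)).mul (pcone_prod hN (l+1) (by omega))).mono (by omega)

lemma offdiag_sum {N : ℕ} (f : ℝ → ℝ) (x : Fin N → ℝ) :
    ∑ i, ∑ j, (if i ≠ j then f (x i - x j) else 0) = ∑ i, ∑ j, f (x i - x j) - N * f 0 := by
  have : ∀ i j : Fin N, (if i ≠ j then f (x i - x j) else 0) =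
      f (x i - x j) - if i = j then f 0 else 0 := by
    intro i j
    by_cases h : i = j
    · simp [h]
    · simp [h]
  simp only [this, Finset.sum_sub_distrib]
  simp

/-- energy in terms of angles -/
noncomputable def aE (N : ℕ) (g : ℝ → ℝ) (x : Fin N → ℝ) : ℝ :=
  ∑ i, ∑ j, if i ≠ j then g (cos (x i - x j) ^ 2) else 0

theorem core (N : ℕ) (hN : 4 ≤ N) (g : ℝ → ℝ)
    (hg : ContDiffOn ℝ ((2 * (N / 2) : ℕ)) g (Set.Ico 0 1))
    (hmon : ∀ k ≤ 2 * (N / 2), ∀ t ∈ Set.Ico (0 : ℝ) 1,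
      0 ≤ iteratedDerivWithin k g (Set.Ico 0 1) t) (x : Fin N → ℝ)
    (hx : ∀ i j, i ≠ j → cos (x i - x j) ^ 2 < 1) :
    aE N g (fun i => (i:ℕ) * π / N) ≤ aE N g x ∧
    ((∀ k ≤ 2 * (N / 2), ∀ t ∈ Set.Ioo (0 : ℝ) 1,
        0 < iteratedDerivWithin k g (Set.Ico 0 1) t) →
      aE N g x = aE N g (fun i => (i:ℕ) * π / N) →
      ∀ i j, i ≠ j → ∃ l < N / 2, cos (x i - x j) ^ 2 = tau N l) := by
  obtain ⟨b1, hb1, hb1', hb1x⟩ := fin_bound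
    (fun p : {p : Fin N × Fin N // p.1 ≠ p.2} => cos (x p.1.1 - x p.1.2) ^ 2) (fun p => hx _ _ p.2)
  obtain ⟨b2, hb2, hb2', hb2x⟩ := fin_bound
    (fun p : Fin (N / 2) => tau N p) (fun p => tau_bounds hN p.2)
  set b := max b1 b2
  have hbx : ∀ i j, i ≠ j → cos (x i - x j) ^ 2 ∈ Set.Icc 0 b := fun i j h =>
    ⟨by positivity, (hb1x ⟨(i, j), h⟩).trans (le_max_left _ _)⟩
  have hbt : ∀ l < N / 2, tau N l ∈ Set.Icc 0 b := fun l h =>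
    ⟨by unfold tau; positivity, (hb2x ⟨l, h⟩).trans (le_max_right _ _)⟩
  have hb0 : 0 ≤ b := le_max_of_le_left hb1
  obtain ⟨G, hG, hGg⟩ := exists_AMSeq hb0 (max_lt hb1' hb2') hg hmon
  set s : ℕ → ℝ := fun j => if j < 2 * (N / 2) then tau N (j / 2) else 0 with hsdef
  have hs : ∀ j < 2 * (N / 2), s j = tau N (j / 2) := fun j hj => by simp only [hsdef, if_pos hj]
  obtain ⟨c, r, hc, hr, hr1, hr0, hnewt⟩ := hG.newton (s := s) (by
    intro j
    by_cases hj : j < 2 * (N / 2)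
    · rw [hs j hj]; exact hbt _ (by omega)
    · simp only [hsdef, if_neg hj]; exact ⟨le_rfl, hb0⟩)
  set h : ℝ → ℝ := fun t => ∑ k ∈ Finset.range (2 * (N / 2)), c k * ∏ j ∈ Finset.range k, (t - s j)
    with hh
  set P : ℝ → ℝ := fun t => ∏ i ∈ Finset.range (N / 2), (t - tau N i) with hP
  have hgh : ∀ t ∈ Set.Icc 0 b, g t = h t + P t * P t * r t := by
    intro t ht
    rw [← hGg t ht, hnewt t, prod_nodes N s hs t _ le_rfl]
  have hcone : PCone (2 * (N / 2) - 1) (fun θ => h (cos θ ^ 2)) := by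
    simp only [hh]
    refine PCone.sum _ _ fun k hk => ?_
    exact ((pcone_nodes hN s hs k hk).mono (by omega)).smul _ (hc k)
  have hPt : ∀ l < N / 2, P (tau N l) = 0 := fun l hl =>
    Finset.prod_eq_zero (Finset.mem_range.2 hl) (by simp)
  have hE := hcone.energy (by omega) (by omega) x
  have hhc : aE N g (fun i => (i:ℕ) * π / N) = aE N h (fun i => (i:ℕ) * π / N) := by
    unfold aE
    refine Finset.sum_congr rfl fun i _ => Finset.sum_congr rfl fun j _ => ?_
    by_cases hij : i = j
    · simp [hij]
    · rw [if_pos hij, if_pos hij]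
      obtain ⟨l, hl, e⟩ := hc_tau' hN i j hij
      rw [e, hgh _ (hbt l hl), hPt l hl]
      ring
  have hlow : aE N h (fun i => (i:ℕ) * π / N) ≤ aE N h x := by
    unfold aE
    rw [offdiag_sum (fun θ => h (cos θ ^ 2)), offdiag_sum (fun θ => h (cos θ ^ 2))]
    linarith
  have hterm : ∀ i j : Fin N, (if i ≠ j then h (cos (x i - x j) ^ 2) else 0) ≤
      (if i ≠ j then g (cos (x i - x j) ^ 2) else 0) := by
    intro i j
    by_cases hij : i = j
    · simp [hij]
    · rw [if_pos hij, if_pos hij, hgh _ (hbx i j hij)]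
      have := hr _ (hbx i j hij)
      have := mul_nonneg (mul_self_nonneg (P (cos (x i - x j) ^ 2))) this
      linarith
  have hup : aE N h x ≤ aE N g x :=
    Finset.sum_le_sum fun i _ => Finset.sum_le_sum fun j _ => hterm i j
  refine ⟨by linarith, fun hst heq i j hij => ?_⟩
  have heq' : aE N h x = aE N g x := by linarith
  unfold aE at heq'
  have h1 := (Finset.sum_eq_sum_iff_of_le fun i _ => Finset.sum_le_sum fun j _ => hterm i j).1 heq' i
    (Finset.mem_univ _)
  have h2 := (Finset.sum_eq_sum_iff_of_le fun j _ => hterm i j).1 h1 j (Finset.mem_univ _)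
  rw [if_pos hij, if_pos hij, hgh _ (hbx i j hij)] at h2
  have hm := hbx i j hij
  generalize cos (x i - x j) ^ 2 = t at *
  have hrpos : 0 < r t := by
    rcases hm.1.eq_or_lt with h0 | h0
    · rw [← h0]
      apply hr0 hst (by omega)
      rw [hs _ (by omega), show (2 * (N / 2) - 1) / 2 = N / 2 - 1 by omega]
      exact tau_last_pos hN
    · exact hr1 hst t ⟨h0, hm.2⟩
  have h3 : P t = 0 := by
    have : P t * P t * r t = 0 := by linarith
    rcases mul_eq_zero.1 this with h | h
    · exact mul_self_eq_zero.1 h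
    · exact absurd h hrpos.ne'
  obtain ⟨l, hl, h4⟩ := Finset.prod_eq_zero_iff.1 h3
  exact ⟨l, Finset.mem_range.1 hl, sub_eq_zero.1 h4⟩

lemma exists_angle (v : EuclideanSpace ℝ (Fin 2)) (hv : ‖v‖ = 1) :
    ∃ θ : ℝ, v = !₂[cos θ, sin θ] := by
  have h : v 0 ^ 2 + v 1 ^ 2 = 1 := by
    have := EuclideanSpace.norm_sq_eq v
    rw [hv] at this
    simpa [Fin.sum_univ_two] using this.symm
  have hz : ‖(⟨v 0, v 1⟩ : ℂ)‖ = 1 := by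
    rw [← sq_eq_sq₀ (norm_nonneg _) zero_le_one, ← Complex.normSq_eq_norm_sq, Complex.normSq_mk]
    linarith
  refine ⟨Complex.arg ⟨v 0, v 1⟩, ?_⟩
  have hne : (⟨v 0, v 1⟩ : ℂ) ≠ 0 := by
    intro h0; rw [h0] at hz; simp at hz
  ext i
  fin_cases i
  · simp [Complex.cos_arg hne, hz]
  · simp [Complex.sin_arg, hz]

lemma inner_angle (a b : ℝ) :
    ⟪(!₂[cos a, sin a] : EuclideanSpace ℝ (Fin 2)), !₂[cos b, sin b]⟫ = cos (a - b) := by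
  simp [PiLp.inner_apply, Fin.sum_univ_two, cos_sub]
  ring

lemma gEnergy_angle (N : ℕ) (g : ℝ → ℝ) (x : Fin N → ℝ) :
    gEnergy N g (fun i => !₂[cos (x i), sin (x i)]) = aE N g x := by
  simp only [gEnergy, aE, inner_angle, sq_abs]

/-- rotation of the plane -/
noncomputable def rotLI (φ : ℝ) : EuclideanSpace ℝ (Fin 2) →ₗᵢ[ℝ] EuclideanSpace ℝ (Fin 2) where
  toFun v := !₂[cos φ * v 0 - sin φ * v 1, sin φ * v 0 + cos φ * v 1]
  map_add' v w := by
    ext i; fin_cases i <;> simp <;> ring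
  map_smul' a v := by
    ext i; fin_cases i <;> simp <;> ring
  norm_map' v := by
    rw [← sq_eq_sq₀ (norm_nonneg _) (norm_nonneg _), EuclideanSpace.norm_sq_eq,
      EuclideanSpace.norm_sq_eq]
    simp [Fin.sum_univ_two]
    linear_combination (v 0 ^ 2 + v 1 ^ 2) * sin_sq_add_cos_sq φ

lemma rotLI_angle (φ a : ℝ) : rotLI φ !₂[cos a, sin a] = !₂[cos (φ + a), sin (φ + a)] := by
  ext i
  fin_cases i
  · simp [rotLI, cos_add]
  · simp [rotLI, sin_add]

lemma equiv_of_tau {N : ℕ} (hN : 4 ≤ N) (x : Fin N → ℝ)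
    (hx : ∀ i j, i ≠ j → cos (x i - x j) ^ 2 < 1)
    (ht : ∀ i j, i ≠ j → ∃ l < N / 2, cos (x i - x j) ^ 2 = tau N l) :
    EquivConfig 2 N (halfCircle N) (fun i => !₂[cos (x i), sin (x i)]) := by
  have hNpos : 0 < N := by omega
  have hN' : (N:ℝ) ≠ 0 := by exact_mod_cast hNpos.ne'
  set z : Fin N := ⟨0, hNpos⟩ with hz
  have h1 : ∀ i, ∃ n : ℤ, x i = x z + n * π / N := by
    intro i
    by_cases h : i = z
    · exact ⟨0, by simp [h]⟩
    · obtain ⟨l, hl, e⟩ := ht i z h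
      rw [tau, cos_sq, cos_sq] at e
      have e' : cos (2 * (x i - x z)) = cos (2 * ((((N / 2 : ℕ) : ℝ) - l) * (π / N))) := by linarith
      rw [cos_eq_cos_iff] at e'
      generalize N / 2 = m at e'
      obtain ⟨k, hk | hk⟩ := e'
      · refine ⟨(m : ℤ) - l - k * N, ?_⟩
        push_cast at hk ⊢
        field_simp at hk ⊢
        linarith
      · refine ⟨-((m : ℤ) - l) + k * N, ?_⟩
        push_cast at hk ⊢
        field_simp at hk ⊢
        linarith
  choose n hn using h1
  have hNz : (0:ℤ) < N := by exact_mod_cast hNpos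
  have hlt : ∀ i, (n i % N).toNat < N := by
    intro i
    have := Int.emod_lt_of_pos (n i) hNz
    omega
  set f : Fin N → Fin N := fun i => ⟨(n i % N).toNat, hlt i⟩ with hf
  have hsin : ∀ k : ℤ, cos (k * π) ^ 2 = 1 := by
    intro k
    rw [cos_sq', sin_int_mul_pi]; simp
  have hinj : Function.Injective f := by
    intro i j hij
    by_contra hne
    have h2 : (n i % N).toNat = (n j % N).toNat := by simpa [hf] using hij
    have h3 : n i % N = n j % N := by
      have := Int.emod_nonneg (n i) hNz.ne'
      have := Int.emod_nonneg (n j) hNz.ne'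
      omega
    obtain ⟨k, hk⟩ := Int.ModEq.dvd (show n j ≡ n i [ZMOD N] from h3.symm)
    have h4 : x i - x j = k * π := by
      have hk' : (n i:ℝ) - n j = N * k := by exact_mod_cast hk
      rw [hn i, hn j]
      field_simp
      linear_combination π * hk'
    have := hx i j hne
    rw [h4, hsin] at this
    exact lt_irrefl _ this
  have hbij : Function.Bijective f := Finite.injective_iff_bijective.1 hinj
  refine ⟨(rotLI (x z)).toLinearIsometryEquiv rfl, Equiv.ofBijective f hbij,
    fun i => cos ((n i / N : ℤ) * π), ?_, ?_⟩
  · intro i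
    exact sq_eq_one_iff.1 (hsin _)
  · intro i
    have hc : halfCircle N (f i) = !₂[cos (((f i : ℕ):ℝ) * π / N), sin (((f i : ℕ):ℝ) * π / N)] := rfl
    have hfi : (((f i : ℕ):ℝ)) = (n i : ℝ) - N * ((n i / N : ℤ):ℝ) := by
      have h5 : (((n i % N).toNat : ℤ)) = n i % N := Int.toNat_of_nonneg (Int.emod_nonneg (n i) hNz.ne')
      have h6 : ((f i : ℕ) : ℤ) = n i - N * (n i / N) := by
        have := Int.emod_add_mul_ediv (n i) N
        simp only [hf]
        omega
      exact_mod_cast h6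
    simp only [Equiv.ofBijective_apply, LinearIsometry.coe_toLinearIsometryEquiv, hc, rotLI_angle]
    have hang : x i = (x z + (f i : ℕ) * π / N) + (n i / N : ℤ) * π := by
      rw [hn i, hfi]
      field_simp
      ring
    have hs0 := sin_int_mul_pi (n i / N)
    ext j
    fin_cases j
    · simp [hang, cos_add _ (((n i / N : ℤ):ℝ) * π), hs0]
      ring
    · simp [hang, sin_add _ (((n i / N : ℤ):ℝ) * π), hs0]
      ring

/-- For `N ≥ 4` and `g` absolutely monotone up to order `2⌊N/2⌋` on `[0,1)`, `X_N^(h)`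
minimizes `Σ_{i≠j} g(|⟨x_i,x_j⟩|²)` among `N`-tuples of pairwise non-parallel unit
vectors in `ℝ²`; for strictly absolutely monotone `g` every minimizer is equivalent to
`X_N^(h)`. -/
theorem halfCircle_minimizes_gEnergy
    (N : ℕ) (hN : 4 ≤ N) (g : ℝ → ℝ)
    (hg : ContDiffOn ℝ ((2 * (N / 2) : ℕ)) g (Set.Ico 0 1))
    (hmon : ∀ k ≤ 2 * (N / 2), ∀ t ∈ Set.Ico (0 : ℝ) 1,
      0 ≤ iteratedDerivWithin k g (Set.Ico 0 1) t) :
    (∀ X : Fin N → EuclideanSpace ℝ (Fin 2),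
      (∀ i, ‖X i‖ = 1) → (∀ i j, i ≠ j → |⟪X i, X j⟫| < 1) →
      gEnergy N g (halfCircle N) ≤ gEnergy N g X) ∧
    ((∀ k ≤ 2 * (N / 2), ∀ t ∈ Set.Ioo (0 : ℝ) 1,
        0 < iteratedDerivWithin k g (Set.Ico 0 1) t) →
      ∀ X : Fin N → EuclideanSpace ℝ (Fin 2),
        (∀ i, ‖X i‖ = 1) → (∀ i j, i ≠ j → |⟪X i, X j⟫| < 1) →
        gEnergy N g X = gEnergy N g (halfCircle N) →
        EquivConfig 2 N (halfCircle N) X) := by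
  have hX : ∀ X : Fin N → EuclideanSpace ℝ (Fin 2), (∀ i, ‖X i‖ = 1) →
      (∀ i j, i ≠ j → |⟪X i, X j⟫| < 1) → ∃ x : Fin N → ℝ,
      X = (fun i => !₂[cos (x i), sin (x i)]) ∧ ∀ i j, i ≠ j → cos (x i - x j) ^ 2 < 1 := by
    intro X h1 h2
    choose x hx using fun i => exists_angle (X i) (h1 i)
    refine ⟨x, funext hx, fun i j hij => ?_⟩
    have := h2 i j hij
    rw [hx i, hx j, inner_angle] at this
    rwa [sq_lt_one_iff_abs_lt_one]
  have hhc : halfCircle N = (fun i : Fin N => !₂[cos ((i:ℕ) * π / N), sin ((i:ℕ) * π / N)]) := rfl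
  refine ⟨fun X h1 h2 => ?_, fun hst X h1 h2 heq => ?_⟩
  · obtain ⟨x, rfl, hx⟩ := hX X h1 h2
    rw [hhc, gEnergy_angle N g (fun i : Fin N => (i:ℕ) * π / N), gEnergy_angle]
    exact (core N hN g hg hmon x hx).1
  · obtain ⟨x, rfl, hx⟩ := hX X h1 h2
    rw [hhc, gEnergy_angle N g (fun i : Fin N => (i:ℕ) * π / N), gEnergy_angle] at heq
    exact equiv_of_tau hN x hx ((core N hN g hg hmon x hx).2 hst heq)
end

section
/- Let p > 2. Then X_4^(h), the 4-tuple of unit vectors (cos(kπ/4), sin(kπ/4)) ∈ ℝ² for k = 0,1,2,3, satisfies FP_{p,4,2}(X_4^(h)) ≤ FP_{p,4,2}(X) for every X ∈ S(4,2), and every X ∈ S(4,2) attaining equality is equivalent to X_4^(h). -/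
open scoped RealInnerProductSpace
open Real

/-- The `p`-frame potential `FP_{p,N,d}(X) = Σ_{k≠ℓ} |⟨x_k,x_ℓ⟩|^p`. -/
noncomputable def framePotential (d N : ℕ) (p : ℝ)
    (X : Fin N → EuclideanSpace ℝ (Fin d)) : ℝ :=
  ∑ k : Fin N, ∑ l : Fin N, if k ≠ l then |⟪X k, X l⟫| ^ p else 0


lemma pw1 {v r : ℝ} (hv : 0 < v) (h0 : 0 < r) (h1 : r < 1) :
    v^2 ≤ v^(1+r) * ((1-r)*v+r) := by
  have h := Real.geom_mean_le_arith_mean2_weighted (w₁ := 1-r) (w₂ := r) (p₁ := v) (p₂ := 1)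
    (by linarith) h0.le hv.le (by norm_num) (by ring)
  rw [Real.one_rpow, mul_one, mul_one] at h
  have e : v^(1+r) * v^(1-r) = v^2 := by
    rw [← Real.rpow_add hv, ← Real.rpow_natCast]; congr 1; push_cast; ring
  rw [← e]
  exact mul_le_mul_of_nonneg_left h (Real.rpow_nonneg hv.le _)

lemma pw0 {v r : ℝ} (hv : 0 < v) : v + r * (v * log v) ≤ v^(1+r) := by
  rw [Real.rpow_add hv, Real.rpow_one, Real.rpow_def_of_pos hv r]
  nlinarith [Real.add_one_le_exp (log v * r)]

lemma pw2 {v r : ℝ} (hv : 0 < v) (h0 : 0 < r) :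
    v + 2*r*v - 2*r*√v ≤ v^(1+r) := by
  refine le_trans ?_ (pw0 hv)
  have hs : 0 < √v := Real.sqrt_pos.2 hv
  have h := Real.one_sub_inv_le_log_of_pos hs
  have e : log v = 2 * log √v := by rw [Real.log_sqrt hv.le]; ring
  have e2 : v * (√v)⁻¹ = √v := by
    rw [← div_eq_mul_inv, Real.div_sqrt]
  have h3 : 2 * v - 2 * √v ≤ v * log v := by
    rw [e]; nlinarith
  nlinarith

lemma ulogu {u : ℝ} (hu : 0 < u) (h2 : u ≤ 2) :
    (u-1) + 0.37*(u-1)^2 ≤ u * log u := by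
  rcases le_total u 1 with h | h
  · have h1 : log u⁻¹ ≤ sinh (log u⁻¹) := by
      rw [Real.self_le_sinh_iff]; exact Real.log_nonneg (one_le_inv_iff₀.2 ⟨hu, h⟩)
    rw [Real.sinh_log (by positivity), inv_inv, Real.log_inv] at h1
    have : u * u⁻¹ = 1 := mul_inv_cancel₀ hu.ne'
    nlinarith [sq_nonneg (u-1)]
  · set y := √u with hy
    have hyy : y^2 = u := Real.sq_sqrt hu.le
    have hy1 : 1 ≤ y := Real.one_le_sqrt.2 h
    have hy2 : y ≤ 1.4143 := by
      apply Real.sqrt_le_iff.2; constructor <;> norm_num; linarith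
    have hl := Real.le_log_one_add_of_nonneg (x := y - 1) (by linarith)
    have e : log u = 2 * log y := by rw [hy, Real.log_sqrt hu.le]; ring
    rw [show 1 + (y-1) = y by ring, show y - 1 + 2 = y+1 by ring, div_le_iff₀ (by linarith)] at hl
    rw [e, ← hyy]
    have h3 : ((y^2-1) + 0.37*(y^2-1)^2) * (y+1) ≤ y^2 * (4*(y-1)) := by
      have : 0 ≤ (y-1)^2 * (3*y+1 - 0.37*(y+1)^3) := by
        apply mul_nonneg (sq_nonneg _); nlinarith [mul_nonneg (sub_nonneg.2 hy1) (sub_nonneg.2 hy2), mul_nonneg (mul_nonneg (sub_nonneg.2 hy1) (sub_nonneg.2 hy2)) (by linarith : 0 ≤ y)]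
      nlinarith
    have : ((y^2-1) + 0.37*(y^2-1)^2) * (y+1) ≤ y^2 * (2*log y) * (y+1) := by nlinarith [sq_nonneg y]
    exact le_of_mul_le_mul_right this (by linarith)

lemma pw3 {u r : ℝ} (hu : 0 ≤ u) (h2 : u ≤ 2) (h0 : 0 < r) (h1 : r < 1) :
    1 + (1+r)*(u-1) + 0.37*r*(u-1)^2 ≤ u^(1+r) := by
  rcases hu.eq_or_lt with h | h
  · rw [← h, Real.zero_rpow (by linarith)]; nlinarith
  · refine le_trans ?_ (pw0 h)
    nlinarith [ulogu h h2]

lemma pw4 {u r : ℝ} (hu : 0 ≤ u) (h1 : 1 ≤ r) :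
    1 + (1+r)*(u-1) + r*(u-1)^2 ≤ u^(1+r) := by
  rcases hu.eq_or_lt with h | h
  · rw [← h, Real.zero_rpow (by linarith)]; nlinarith
  · have := one_add_mul_self_le_rpow_one_add (s := u-1) (by linarith) h1
    rw [Real.rpow_add h, Real.rpow_one]
    rw [show 1+(u-1) = u by ring] at this
    nlinarith
/- J lemma, D^2 ≤ 1/2 -/
lemma J1 {D g w : ℝ} (hD : 0 < D) (hg : 0 < g) (hgD : g ≤ 1 - D) (h2 : D^2 ≤ 1/2)
   (hw : w = 0.37*(1-(1-2*D^2)*(1-g)^2)) : D*g < w := by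
  subst hw
  nlinarith [mul_pos hD hg, mul_nonneg (sub_nonneg.2 hgD) hD.le, mul_nonneg (sub_nonneg.2 hgD) hg.le, mul_nonneg (mul_nonneg (sub_nonneg.2 hgD) hg.le) (sub_nonneg.2 h2), sq_nonneg (D-1/2), sq_nonneg (g-1/2)]
lemma J3 {D g w : ℝ} (hD : 0 < D) (hg : 0 < g) (hgD : g ≤ 1 - D) (h2 : 1/2 ≤ D^2) (h9 : D ≤ 0.91)
   (hw : w = 0.37*(1+(2*D^2-1)*((D+g)^2+D^2-1))) : D*g < w := by
  subst hw
  nlinarith [mul_pos hD hg, mul_nonneg (sub_nonneg.2 hgD) hD.le, sq_nonneg (D-1/2), mul_nonneg (sub_nonneg.2 h2) (mul_pos hD hg).le, mul_nonneg (sub_nonneg.2 h2) (sub_nonneg.2 h2)]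
lemma J5 {D g s w : ℝ} (hs : 0 < s) (hg : s^2 = g) (hgD : g ≤ 1 - D) (h9 : 0.9 ≤ D) 
   (hw : w = 0.37*(1+(2*D^2-1)*((D+g)^2+D^2-1))) : 0 < (2-D)*g-2*s+w := by
  have : s ≤ 0.3163 := by nlinarith
  have hD1 : D ≤ 1 := by nlinarith
  have h1 : 0.81 ≤ D^2 := by nlinarith
  have h2 : D^2 ≤ (D+g)^2 := by nlinarith
  have : 0.37*(1+0.62*(0.62+2*0.9*g)) ≤ w := by
    subst hw
    have : 0.62+2*0.9*g ≤ (D+g)^2+D^2-1 := by nlinarith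
    nlinarith
  nlinarith
lemma quadpos {A B C L g : ℝ} (hg : 0 ≤ g) (hL : g ≤ L) (h0 : 0 < A) (h1 : 0 < 2*A+B*L)
    (h2 : 0 < A+B*L+C*L^2) : 0 < A + B*g + C*g^2 := by
  rcases hg.eq_or_lt with h | h
  · rw [← h]; simpa using h0
  have hLp : 0 < L := by linarith
  have e : 0 ≤ L - g := by linarith
  have : 0 < L^2 * (A + B*g + C*g^2) := by
    have e1 : L^2 * (A + B*g + C*g^2) =
      A*(L-g)^2 + (2*A+B*L)*(g*(L-g)) + (A+B*L+C*L^2)*g^2 := by ring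
    rw [e1]; positivity
  exact pos_of_mul_pos_right this (by positivity)

lemma bern8 {x y : ℝ} (hx : 0 ≤ x) (hy : 0 ≤ y) :
   0 ≤ x^8 ∧ 0 ≤ x^7*y ∧ 0 ≤ x^6*y^2 ∧ 0 ≤ x^5*y^3 ∧ 0 ≤ x^4*y^4 ∧ 0 ≤ x^3*y^5 ∧ 0 ≤ x^2*y^6 ∧
   0 ≤ x*y^7 ∧ 0 ≤ y^8 := by
  refine ⟨?_, ?_, ?_, ?_, ?_, ?_, ?_, ?_, ?_⟩ <;> positivity

lemma J2a {D g w : ℝ} (h1 : 0.1 ≤ D) (hg : 0 ≤ g) (hgD : g ≤ 1 - D) (h9 : D ≤ 0.71)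
   (hw : w = 0.37*(2*D^2+(1+D)*(1-2*D^2)*g)) : (D-w)^2 < 4*(1-D)*(1-g)*(w-D*g) := by
  obtain ⟨a0,a1,a2,a3,a4,a5,a6,a7,a8⟩ := bern8 (sub_nonneg.2 h1) (sub_nonneg.2 h9)
  have := quadpos (A := 4*(1-D)*(0.74*D^2) - (D-0.74*D^2)^2)
    (B := 4*(1-D)*(0.37*(1+D)*(1-2*D^2) - D - 0.74*D^2) + 2*(D-0.74*D^2)*(0.37*(1+D)*(1-2*D^2)))
    (C := -(4*(1-D)*(0.37*(1+D)*(1-2*D^2) - D)) - (0.37*(1+D)*(1-2*D^2))^2) hg hgD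
    (by nlinarith) (by linarith) (by linarith)
  subst hw
  linarith

lemma J4a {D g w : ℝ} (hg : 0 ≤ g) (hgD : g ≤ 1 - D) (h1 : 0.7 ≤ D) (h9 : D ≤ 0.91)
   (hw : w = 0.37*(1+(2*D^2-1)*(2*D^2-1+2*D*g))) : (D-w)^2 < 4*(1-D)*(1-g)*(w-D*g) := by
  obtain ⟨a0,a1,a2,a3,a4,a5,a6,a7,a8⟩ := bern8 (sub_nonneg.2 h1) (sub_nonneg.2 h9)
  have := quadpos (A := 4*(1-D)*(0.37*(1+(2*D^2-1)^2)) - (D-0.37*(1+(2*D^2-1)^2))^2)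
    (B := 4*(1-D)*(0.74*(2*D^2-1)*D - D - 0.37*(1+(2*D^2-1)^2)) + 2*(D-0.37*(1+(2*D^2-1)^2))*(0.74*(2*D^2-1)*D))
    (C := -(4*(1-D)*(0.74*(2*D^2-1)*D - D)) - (0.74*(2*D^2-1)*D)^2) hg hgD
    (by linarith) (by linarith) (by linarith)
  subst hw
  linarith

/- small D -/
lemma J2b {D g w : ℝ} (hD : 0 < D) (h1 : D ≤ 0.1) (hg : 0 ≤ g)
   (hw : 0.37*(2*D^2+(1+D)*(1-2*D^2)*g) ≤ w) (hwD : w < D) :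
   (D-w)^2 < 4*(1-D)*(1-g)*(w-D*g) := by
  have h2 : 0.98 ≤ (1+D)*(1-2*D^2) := by nlinarith
  have h3 : 0.74*D^2 + 0.3626*g ≤ w := by nlinarith
  have h4 : g ≤ 0.28 := by nlinarith
  have h5 : 0.74*D^2 + 0.26*g ≤ w - D*g := by nlinarith
  have h6 : (D-w)^2 ≤ D^2 := by nlinarith
  have h7 : 0.6 ≤ (1-D)*(1-g) := by nlinarith
  nlinarith

lemma Jmono {D g w w' : ℝ} (hD : D < 1) (hg : g < 1) (h : w' ≤ w) (hw : w ≤ D)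
   (hJ : (D-w')^2 < 4*(1-D)*(1-g)*(w'-D*g)) : (D-w)^2 < 4*(1-D)*(1-g)*(w-D*g) := by
  have : 0 ≤ (1-D)*(1-g) := mul_nonneg (by linarith) (by linarith)
  nlinarith

lemma Kpos {D g w r : ℝ} (hg : 0 < g) (hr : 0 < r) (hD1 : D < 1) (hg1 : g < 1)
    (hw : D*g < w) (hJ : w < D → (D-w)^2 < 4*(1-D)*(1-g)*(w-D*g)) :
    0 < g^2*(1-D) + r*g*(w-D) + r^2*(1-g)*(w-D*g) := by
  have a : 0 < 1 - D := by linarith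
  have b : 0 < 1 - g := by linarith
  have c : 0 < w - D*g := by linarith
  rcases le_or_gt D w with h | h
  · have : 0 ≤ w - D := by linarith
    positivity
  · have hJ := hJ h
    have : 0 < 4*(1-D) * (g^2*(1-D) + r*g*(w-D) + r^2*(1-g)*(w-D*g)) := by
      have e : 4*(1-D) * (g^2*(1-D) + r*g*(w-D) + r^2*(1-g)*(w-D*g)) =
        (2*(1-D)*g - r*(D-w))^2 + r^2*(4*(1-D)*(1-g)*(w-D*g) - (D-w)^2) := by ring
      rw [e]
      have : 0 < 4*(1-D)*(1-g)*(w-D*g) - (D-w)^2 := by linarith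
      positivity
    exact pos_of_mul_pos_right this (by positivity)

lemma core0 {D g w r : ℝ} (hg : 0 < g) (hr : 0 < r) (hr1 : r < 1)
    (hK : 0 < g^2*(1-D) + r*g*(w-D) + r^2*(1-g)*(w-D*g)) :
    0 < g^(1+r) - (1+r)*(D*g) + r*w := by
  have h := pw1 hg hr hr1
  have hden : 0 < (1-r)*g+r := by nlinarith [mul_pos (sub_pos.2 hr1) hg]
  by_contra hc
  push Not at hc
  have : g^(1+r) * ((1-r)*g+r) ≤ ((1+r)*(D*g) - r*w) * ((1-r)*g+r) :=
    mul_le_mul_of_nonneg_right (by linarith) hden.le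
  nlinarith

lemma core1 {D g r w : ℝ} (hD : 0 < D) (hg : 0 < g) (hgD : g ≤ 1 - D) (h2 : D^2 ≤ 1/2)
    (hr : 0 < r) (hr1 : r < 1) (hw : w = 0.37*(1-(1-2*D^2)*(1-g)^2)) :
    0 < g^(1+r) - (1+r)*(D*g) + r*w := by
  have hlow : 0.37*(2*D^2+(1+D)*(1-2*D^2)*g) ≤ w := by
    have : 0 ≤ (1-2*D^2) * (g * (1-D-g)) :=
      mul_nonneg (by linarith) (mul_nonneg hg.le (by linarith))
    rw [hw]; nlinarith
  refine core0 hg hr hr1 (Kpos hg hr (by linarith) (by linarith) (J1 hD hg hgD h2 hw) ?_)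
  intro hwD
  rcases le_total D 0.1 with h | h
  · exact J2b hD h hg.le hlow hwD
  · exact Jmono (by linarith) (by linarith) hlow hwD.le
      (J2a h hg.le hgD (by nlinarith) rfl)

lemma core2 {D g r w : ℝ} (hD : 0 < D) (hg : 0 < g) (hgD : g ≤ 1 - D) (h2 : 1/2 ≤ D^2)
    (hr : 0 < r) (hr1 : r < 1) (hw : w = 0.37*(1+(2*D^2-1)*((D+g)^2+D^2-1))) :
    0 < g^(1+r) - (1+r)*(D*g) + r*w := by
  rcases le_total D 0.91 with h | h
  · have hlow : 0.37*(1+(2*D^2-1)*(2*D^2-1+2*D*g)) ≤ w := by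
      have : 0 ≤ (2*D^2-1) * g^2 := mul_nonneg (by linarith) (by positivity)
      rw [hw]; nlinarith
    refine core0 hg hr hr1 (Kpos hg hr (by linarith) (by linarith) (J3 hD hg hgD h2 h hw) ?_)
    intro hwD
    exact Jmono (by linarith) (by linarith) hlow hwD.le
      (J4a hg.le hgD (by nlinarith) h rfl)
  · have h5 := J5 (Real.sqrt_pos.2 hg) (Real.sq_sqrt hg.le) hgD (by linarith) hw
    have := pw2 hg hr
    nlinarith [mul_pos hr h5, mul_nonneg hg.le (by linarith : 0 ≤ 1 - D)]

lemma core3 {x y D r : ℝ} (hx : 0 < x) (hy : 0 < y) (hD : 0 < D)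
    (hc : D^2+x^2+y^2+2*D*x*y ≤ 1) (hr : 0 < r) (hr1 : r < 1) :
    0 < (2*x^2)^(1+r) + (2*y^2)^(1+r) - 4*(1+r)*(D*x*y)
      + 0.37*r*(2+2*(2*D^2-1)*(2*x^2-1)*(2*y^2-1)) := by
  have hconv : 2*(x^2+y^2)^(1+r) ≤ (2*x^2)^(1+r) + (2*y^2)^(1+r) := by
    have hcv : ConvexOn ℝ (Set.Ici 0) (fun x : ℝ => x^(1+r)) := convexOn_rpow (by linarith)
    have := hcv.2 (Set.mem_Ici.2 (by positivity : 0 ≤ 2*x^2))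
      (Set.mem_Ici.2 (by positivity : 0 ≤ 2*y^2)) (by norm_num : (0:ℝ) ≤ 1/2)
      (by norm_num : (0:ℝ) ≤ 1/2) (by norm_num)
    simp only [smul_eq_mul] at this
    rw [show 1/2*(2*x^2)+1/2*(2*y^2) = x^2+y^2 by ring] at this
    linarith
  set g := 2*x*y with hgdef
  have hg : 0 < g := by positivity
  have hgm : g ≤ x^2+y^2 := by nlinarith [sq_nonneg (x-y)]
  have hDg : D^2 + (x^2+y^2) + D*g ≤ 1 := by rw [hgdef]; linarith
  have hgD : g ≤ 1 - D := by
    have : (1+D)*g ≤ (1+D)*(1-D) := by nlinarith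
    exact le_of_mul_le_mul_left this (by linarith)
  have hmono : g^(1+r) ≤ (x^2+y^2)^(1+r) := Real.rpow_le_rpow hg.le hgm (by linarith)
  have e : (2*x^2-1)*(2*y^2-1) = 1 - 2*(x^2+y^2) + g^2 := by rw [hgdef]; ring
  have e2 : 2+2*(2*D^2-1)*(2*x^2-1)*(2*y^2-1) = 2*(1+(2*D^2-1)*(1 - 2*(x^2+y^2) + g^2)) := by
    rw [← e]; ring
  rw [e2]
  have e3 : D*x*y = D*g/2 := by rw [hgdef]; ring
  rw [e3]
  rcases le_total (D^2) (1/2) with h | h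
  · have h1 := core1 hD hg hgD h hr hr1 rfl
    have : 1-(1-2*D^2)*(1-g)^2 ≤ 1+(2*D^2-1)*(1 - 2*(x^2+y^2) + g^2) := by
      nlinarith [mul_nonneg (by linarith : 0 ≤ 1-2*D^2) (sub_nonneg.2 hgm)]
    nlinarith [mul_le_mul_of_nonneg_left this hr.le]
  · have h1 := core2 hD hg hgD h hr hr1 rfl
    have : 1+(2*D^2-1)*((D+g)^2+D^2-1) ≤ 1+(2*D^2-1)*(1 - 2*(x^2+y^2) + g^2) := by
      nlinarith [mul_nonneg (by linarith : 0 ≤ 2*D^2-1) (sub_nonneg.2 hDg)]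
    nlinarith [mul_le_mul_of_nonneg_left this hr.le]

lemma abs_form {a b c : ℝ} (ha : a^2 ≤ 1) (hb : b^2 ≤ 1) (hc : c^2 ≤ 1) :
    -1 ≤ (2*a^2-1)*(2*b^2-1)*(2*c^2-1) := by
  have h1 : |2*a^2-1| ≤ 1 := abs_le.2 ⟨by nlinarith [sq_nonneg a], by linarith⟩
  have h2 : |2*b^2-1| ≤ 1 := abs_le.2 ⟨by nlinarith [sq_nonneg b], by linarith⟩
  have h3 : |2*c^2-1| ≤ 1 := abs_le.2 ⟨by nlinarith [sq_nonneg c], by linarith⟩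
  have : |(2*a^2-1)*(2*b^2-1)*(2*c^2-1)| ≤ 1 := by
    rw [abs_mul, abs_mul]
    exact mul_le_one₀ (mul_le_one₀ h1 (abs_nonneg _) h2) (abs_nonneg _) h3
  exact (abs_le.1 this).1

lemma coreA {x y D r : ℝ} (hx : x^2 ≤ 1) (hy : y^2 ≤ 1) (hD : D^2 ≤ 1)
    (hc : D^2+x^2+y^2+2*D*x*y ≤ 1) (hr : 0 < r) (hr1 : r < 1) :
    0 ≤ (2*x^2)^(1+r) + (2*y^2)^(1+r) - 4*(1+r)*(D*x*y)
      + 0.37*r*(2+2*(2*D^2-1)*(2*x^2-1)*(2*y^2-1)) ∧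
    ((2*x^2)^(1+r) + (2*y^2)^(1+r) - 4*(1+r)*(D*x*y)
      + 0.37*r*(2+2*(2*D^2-1)*(2*x^2-1)*(2*y^2-1)) = 0 → x = 0 ∧ y = 0 ∧ D = 0) := by
  rcases le_or_gt (D*x*y) 0 with h | h
  · have h1 := abs_form hD hx hy
    have hA : 0 ≤ (2*x^2)^(1+r) := by positivity
    have hB : 0 ≤ (2*y^2)^(1+r) := by positivity
    have hC : 0 ≤ 0.37*r*(2+2*(2*D^2-1)*(2*x^2-1)*(2*y^2-1)) := by
      apply mul_nonneg (by positivity); linarith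
    have hE : 0 ≤ - (4*(1+r)*(D*x*y)) := by nlinarith
    refine ⟨by linarith, fun h0 => ?_⟩
    have hA0 : (2*x^2)^(1+r) = 0 := by linarith
    have hB0 : (2*y^2)^(1+r) = 0 := by linarith
    have hx0 : x = 0 := by
      have := (Real.rpow_eq_zero (by positivity) (by linarith)).1 hA0; simpa using this
    have hy0 : y = 0 := by
      have := (Real.rpow_eq_zero (by positivity) (by linarith)).1 hB0; simpa using this
    refine ⟨hx0, hy0, ?_⟩
    have hC0 : 0.37*r*(2+2*(2*D^2-1)*(2*x^2-1)*(2*y^2-1)) = 0 := by linarith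
    rw [hx0, hy0] at hC0
    have : r * D^2 = 0 := by linarith
    simpa [hr.ne'] using this
  · have hne : D ≠ 0 ∧ x ≠ 0 ∧ y ≠ 0 := by
      refine ⟨?_, ?_, ?_⟩ <;> rintro rfl <;> simp at h
    have e : |D| * |x| * |y| = D*x*y := by rw [← abs_mul, ← abs_mul, abs_of_pos h]
    have := core3 (x := |x|) (y := |y|) (D := |D|) (r := r) (abs_pos.2 hne.2.1)
      (abs_pos.2 hne.2.2) (abs_pos.2 hne.1) (by simp only [sq_abs]; linarith) hr hr1
    simp only [sq_abs, e] at this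
    exact ⟨this.le, fun h0 => absurd h0 this.ne'⟩

lemma coreB {x y D r : ℝ} (hx : x^2 ≤ 1) (hy : y^2 ≤ 1) (hD : D^2 ≤ 1)
    (hc : D^2+x^2+y^2+2*D*x*y ≤ 1) (hr : 1 ≤ r) :
    0 ≤ (2*x^2)^(1+r) + (2*y^2)^(1+r) - 4*(1+r)*(D*x*y)
      + r*(2+2*(2*D^2-1)*(2*x^2-1)*(2*y^2-1)) ∧
    ((2*x^2)^(1+r) + (2*y^2)^(1+r) - 4*(1+r)*(D*x*y)
      + r*(2+2*(2*D^2-1)*(2*x^2-1)*(2*y^2-1)) = 0 → x = 0 ∧ y = 0 ∧ D = 0) := by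
  have hA := pw4 (u := 2*x^2) (by positivity) hr
  have hB := pw4 (u := 2*y^2) (by positivity) hr
  have h1 : 0 ≤ x^2+y^2-2*D*x*y := by nlinarith [sq_nonneg (x-D*y), sq_nonneg (y), mul_nonneg (sq_nonneg y) (sub_nonneg.2 hD)]
  have h2 : 0 ≤ (2*x^2-1)^2+(2*y^2-1)^2+2*(2*D^2-1)*(2*x^2-1)*(2*y^2-1) := by
    nlinarith [mul_nonneg (sq_nonneg D) (sq_nonneg ((2*x^2-1)+(2*y^2-1))), mul_nonneg (sub_nonneg.2 hD) (sq_nonneg ((2*x^2-1)-(2*y^2-1)))]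
  have h3 := mul_nonneg (by linarith : 0 ≤ r) h2
  have h4 := mul_nonneg (by linarith : 0 ≤ r) h1
  refine ⟨by linarith, fun h0 => ?_⟩
  have h5 : x^2+y^2-2*D*x*y = 0 := by linarith
  have h6 : r*((2*x^2-1)^2+(2*y^2-1)^2+2*(2*D^2-1)*(2*x^2-1)*(2*y^2-1)) = 0 := by linarith
  have h7 : (2*x^2-1)^2+(2*y^2-1)^2+2*(2*D^2-1)*(2*x^2-1)*(2*y^2-1) = 0 := by
    rcases mul_eq_zero.1 h6 with h | h
    · linarith
    · exact h
  have h8 : (1-D^2)*y^2 = 0 := by nlinarith [sq_nonneg (x-D*y), mul_nonneg (sq_nonneg y) (sub_nonneg.2 hD)]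
  have h9 : (1-D^2)*x^2 = 0 := by nlinarith [sq_nonneg (y-D*x), mul_nonneg (sq_nonneg x) (sub_nonneg.2 hD)]
  rcases eq_or_ne (D^2) 1 with h | h
  · exfalso
    have : x^2 = 0 := by nlinarith [sq_nonneg x, sq_nonneg y]
    have : y^2 = 0 := by nlinarith [sq_nonneg x, sq_nonneg y]
    nlinarith
  · have hne : 1 - D^2 ≠ 0 := fun h' => h (by linarith)
    have hy0 : y = 0 := by simpa [hne] using h8
    have hx0 : x = 0 := by simpa [hne] using h9
    refine ⟨hx0, hy0, ?_⟩
    rw [hx0, hy0] at h7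
    have : D^2 = 0 := by linarith
    simpa using this


lemma f1 (u v w : ℝ) : cos (u+v-w) = (cos u*cos v - sin u*sin v)*cos w + (sin u*cos v+cos u*sin v)*sin w := by
  rw [Real.cos_sub, Real.cos_add, Real.sin_add]
lemma f2 (u v w : ℝ) : cos (u-v-w) = (cos u*cos v + sin u*sin v)*cos w + (sin u*cos v-cos u*sin v)*sin w := by
  rw [Real.cos_sub, Real.cos_sub, Real.sin_sub]
lemma f3 (u v w : ℝ) : cos (u-v+w) = (cos u*cos v + sin u*sin v)*cos w - (sin u*cos v-cos u*sin v)*sin w := by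
  rw [Real.cos_add, Real.cos_sub, Real.sin_sub]
lemma f4 (u v w : ℝ) : cos (u+v+w) = (cos u*cos v - sin u*sin v)*cos w - (sin u*cos v+cos u*sin v)*sin w := by
  rw [Real.cos_add, Real.cos_add, Real.sin_add]

lemma mainF {q t1 t2 t3 t4 : ℝ} (hq : 1 < q)
    (hP : sin (t1-t2) * sin (t2-t3) * sin (t3-t4) * sin (t4-t1) ≤ 0) :
    4 ≤ (2*cos (t1-t2)^2)^q + (2*cos (t2-t3)^2)^q + (2*cos (t3-t4)^2)^q + (2*cos (t1-t4)^2)^q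
      + (2*cos (t1-t3)^2)^q + (2*cos (t2-t4)^2)^q ∧
    ((2*cos (t1-t2)^2)^q + (2*cos (t2-t3)^2)^q + (2*cos (t3-t4)^2)^q + (2*cos (t1-t4)^2)^q
      + (2*cos (t1-t3)^2)^q + (2*cos (t2-t4)^2)^q = 4 →
      cos (t1-t3) = 0 ∧ cos (t2-t4) = 0 ∧ cos (t1+t3-t2-t4) = 0) := by
  obtain ⟨r, rfl⟩ : ∃ r, q = 1 + r := ⟨q-1, by ring⟩
  have hr : 0 < r := by linarith
  set D := - cos (t1+t3-t2-t4) with hDdef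
  set x := cos (t1-t3) with hxdef
  set y := cos (t2-t4) with hydef
  have sx : sin (t1-t3)^2 = 1 - x^2 := Real.sin_sq _
  have sy : sin (t2-t4)^2 = 1 - y^2 := Real.sin_sq _
  have sD : sin (t1+t3-t2-t4)^2 = 1 - D^2 := by rw [Real.sin_sq, hDdef]; ring
  have hx : x^2 ≤ 1 := by nlinarith [sq_nonneg (sin (t1-t3))]
  have hy : y^2 ≤ 1 := by nlinarith [sq_nonneg (sin (t2-t4))]
  have hD : D^2 ≤ 1 := by nlinarith [sq_nonneg (sin (t1+t3-t2-t4))]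
  have hcD : cos (t1+t3-t2-t4) = -D := by rw [hDdef]; ring
  set a := sin (t1-t3)
  set b := sin (t2-t4)
  set d := sin (t1+t3-t2-t4)
  have k : ∀ z, 2*cos z^2 = 1 + cos (2*z) := fun z => by rw [Real.cos_two_mul]; ring
  have c1 : cos (2*(t1-t2)) = (-D*x-d*a)*y + (d*x-D*a)*b := by
    have e : 2*(t1-t2) = (t1+t3-t2-t4)+(t1-t3)-(t2-t4) := by ring
    rw [e, f1, hcD]; ring
  have c2 : cos (2*(t2-t3)) = (-D*x+d*a)*y + (d*x+D*a)*b := by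
    have e : 2*(t2-t3) = -((t1+t3-t2-t4)-(t1-t3)-(t2-t4)) := by ring
    rw [e, Real.cos_neg, f2, hcD]; ring
  have c3 : cos (2*(t3-t4)) = (-D*x+d*a)*y - (d*x+D*a)*b := by
    have e : 2*(t3-t4) = (t1+t3-t2-t4)-(t1-t3)+(t2-t4) := by ring
    rw [e, f3, hcD]; ring
  have c4 : cos (2*(t1-t4)) = (-D*x-d*a)*y - (d*x-D*a)*b := by
    have e : 2*(t1-t4) = (t1+t3-t2-t4)+(t1-t3)+(t2-t4) := by ring
    rw [e, f4, hcD]; ring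
  have hcross : D^2+x^2+y^2+2*D*x*y ≤ 1 := by
    have e1 : 2*(sin (t1-t4) * sin (t3-t4)) = x - (-D*y - d*b) := by
      have h1 : x = cos ((t1-t4)-(t3-t4)) := by rw [hxdef]; congr 1; ring
      have h2 : -D*y - d*b = cos ((t1-t4)+(t3-t4)) := by
        rw [← hcD, hydef, ← Real.cos_add]; congr 1; ring
      rw [h1, h2, Real.cos_sub, Real.cos_add]; ring
    have e2 : 2*(sin (t1-t2) * sin (t3-t2)) = x - (-D*y + d*b) := by
      have h1 : x = cos ((t1-t2)-(t3-t2)) := by rw [hxdef]; congr 1; ring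
      have h2 : -D*y + d*b = cos ((t1-t2)+(t3-t2)) := by
        rw [← hcD, hydef, ← Real.cos_sub]; congr 1; ring
      rw [h1, h2, Real.cos_sub, Real.cos_add]; ring
    have s1 : sin (t4-t1) = - sin (t1-t4) := by rw [← Real.sin_neg]; congr 1; ring
    have s2 : sin (t2-t3) = - sin (t3-t2) := by rw [← Real.sin_neg]; congr 1; ring
    rw [s1, s2] at hP
    have e3 : (x - (-D*y - d*b)) * (x - (-D*y + d*b)) ≤ 0 := by
      rw [← e1, ← e2]; linarith
    have e4 : d^2*b^2 = (1-D^2)*(1-y^2) := by rw [sD, sy]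
    linarith
  have S1 : cos (2*(t1-t2)) + cos (2*(t2-t3)) + cos (2*(t3-t4)) + cos (2*(t1-t4)) = -4*(D*x*y) := by
    rw [c1, c2, c3, c4]; ring
  have S2 : cos (2*(t1-t2))^2 + cos (2*(t2-t3))^2 + cos (2*(t3-t4))^2 + cos (2*(t1-t4))^2
      = 2+2*(2*D^2-1)*(2*x^2-1)*(2*y^2-1) := by
    rw [c1, c2, c3, c4]
    have : ((-D*x-d*a)*y + (d*x-D*a)*b)^2 + ((-D*x+d*a)*y + (d*x+D*a)*b)^2
      + ((-D*x+d*a)*y - (d*x+D*a)*b)^2 + ((-D*x-d*a)*y - (d*x-D*a)*b)^2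
      = 4*(D^2*x^2+d^2*a^2)*y^2 + 4*(d^2*x^2+D^2*a^2)*b^2 := by ring
    rw [this, sx, sy, sD]; ring
  have lo : ∀ z, 0 ≤ 1 + cos (2*z) := fun z => by linarith [Real.neg_one_le_cos (2*z)]
  have hi : ∀ z, 1 + cos (2*z) ≤ 2 := fun z => by linarith [Real.cos_le_one (2*z)]
  rw [k (t1-t2), k (t2-t3), k (t3-t4), k (t1-t4)]
  rcases lt_or_ge r 1 with hr1 | hr1
  · have A := coreA hx hy hD hcross hr hr1
    have p1 := pw3 (lo (t1-t2)) (hi _) hr hr1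
    have p2 := pw3 (lo (t2-t3)) (hi _) hr hr1
    have p3 := pw3 (lo (t3-t4)) (hi _) hr hr1
    have p4 := pw3 (lo (t1-t4)) (hi _) hr hr1
    rw [← S2] at A
    have S3 : 4*(1+r)*(D*x*y) = -(1+r)*(cos (2*(t1-t2)) + cos (2*(t2-t3)) + cos (2*(t3-t4)) + cos (2*(t1-t4))) := by
      rw [S1]; ring
    rw [S3] at A
    refine ⟨by linarith [A.1], fun h0 => ?_⟩
    have := A.2 (le_antisymm (by linarith) A.1)
    exact ⟨this.1, this.2.1, by rw [hcD, this.2.2, neg_zero]⟩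
  · have A := coreB hx hy hD hcross hr1
    have p1 := pw4 (lo (t1-t2)) hr1
    have p2 := pw4 (lo (t2-t3)) hr1
    have p3 := pw4 (lo (t3-t4)) hr1
    have p4 := pw4 (lo (t1-t4)) hr1
    rw [← S2] at A
    have S3 : 4*(1+r)*(D*x*y) = -(1+r)*(cos (2*(t1-t2)) + cos (2*(t2-t3)) + cos (2*(t3-t4)) + cos (2*(t1-t4))) := by
      rw [S1]; ring
    rw [S3] at A
    refine ⟨by linarith [A.1], fun h0 => ?_⟩
    have := A.2 (le_antisymm (by linarith) A.1)
    exact ⟨this.1, this.2.1, by rw [hcD, this.2.2, neg_zero]⟩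

lemma cross (t1 t2 t3 t4 : ℝ) :
    sin (t1-t2) * sin (t2-t3) * sin (t3-t4) * sin (t4-t1) ≤ 0 ∨
    sin (t1-t3) * sin (t3-t2) * sin (t2-t4) * sin (t4-t1) ≤ 0 ∨
    sin (t1-t2) * sin (t2-t4) * sin (t4-t3) * sin (t3-t1) ≤ 0 := by
  have pl : sin (t1-t3) * sin (t2-t4) = sin (t1-t2) * sin (t3-t4) + sin (t1-t4) * sin (t2-t3) := by
    simp only [Real.sin_sub]
    have h1 := Real.sin_sq_add_cos_sq t1
    ring
  have s1 : sin (t4-t1) = - sin (t1-t4) := by rw [← Real.sin_neg]; congr 1; ring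
  have s2 : sin (t3-t2) = - sin (t2-t3) := by rw [← Real.sin_neg]; congr 1; ring
  have s3 : sin (t4-t3) = - sin (t3-t4) := by rw [← Real.sin_neg]; congr 1; ring
  have s4 : sin (t3-t1) = - sin (t1-t3) := by rw [← Real.sin_neg]; congr 1; ring
  rw [s1, s2, s3, s4]
  set A := sin (t1-t2) * sin (t3-t4) with hA
  set B := sin (t1-t3) * sin (t2-t4) with hB
  set C := sin (t1-t4) * sin (t2-t3) with hC
  have e1 : sin (t1-t2) * sin (t2-t3) * sin (t3-t4) * -sin (t1-t4) = -(A*C) := by rw [hA, hC]; ring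
  have e2 : sin (t1-t3) * -sin (t2-t3) * sin (t2-t4) * -sin (t1-t4) = B*C := by rw [hB, hC]; ring
  have e3 : sin (t1-t2) * sin (t2-t4) * -sin (t3-t4) * -sin (t1-t3) = A*B := by rw [hA, hB]; ring
  rw [e1, e2, e3]
  by_contra hcon
  push Not at hcon
  obtain ⟨h1, h2, h3⟩ := hcon
  nlinarith [mul_pos h2 h3, sq_nonneg B]

noncomputable def vec (t : ℝ) : EuclideanSpace ℝ (Fin 2) :=
  (WithLp.equiv 2 (Fin 2 → ℝ)).symm ![cos t, sin t]

lemma vec_inner (s t : ℝ) : ⟪vec s, vec t⟫ = cos (s - t) := by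
  simp [vec, PiLp.inner_apply, Fin.sum_univ_two, Real.cos_sub]; ring

lemma exists_vec (x : EuclideanSpace ℝ (Fin 2)) (h : ‖x‖ = 1) : ∃ t, x = vec t := by
  have h1 : x 0 ^ 2 + x 1 ^ 2 = 1 := by
    have := EuclideanSpace.norm_sq_eq x
    rw [h, Fin.sum_univ_two] at this
    simpa using this.symm
  have h2 : ‖(⟨x 0, x 1⟩ : ℂ)‖ = 1 := by
    rw [Complex.norm_def, Complex.normSq_mk, Real.sqrt_eq_one]; linarith
  refine ⟨Complex.arg ⟨x 0, x 1⟩, ?_⟩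
  have hne : (⟨x 0, x 1⟩ : ℂ) ≠ 0 := by
    intro h0; rw [h0] at h2; simp at h2
  ext i
  fin_cases i
  · simp [vec, Complex.cos_arg hne, h2]
  · simp [vec, Complex.sin_arg, h2]

lemma vec_pm {s t : ℝ} (h : sin (t - s) = 0) : vec t = (1:ℝ) • vec s ∨ vec t = (-1:ℝ) • vec s := by
  have h1 : cos (t-s) = 1 ∨ cos (t-s) = -1 := by
    have := Real.sin_sq_add_cos_sq (t-s)
    rw [h] at this
    have h0 : (cos (t-s) - 1) * (cos (t-s) + 1) = 0 := by linarith
    rcases mul_eq_zero.1 h0 with h0 | h0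
    · left; linarith
    · right; linarith
  have hc : cos t = cos s * cos (t-s) := by
    conv_lhs => rw [show t = s + (t-s) by ring, Real.cos_add, h]
    ring
  have hs : sin t = sin s * cos (t-s) := by
    conv_lhs => rw [show t = s + (t-s) by ring, Real.sin_add, h]
    ring
  rcases h1 with h1 | h1
  · left; ext i; fin_cases i <;> simp [vec, hc, hs, h1]
  · right; ext i; fin_cases i <;> simp [vec, hc, hs, h1]

noncomputable def rot (t : ℝ) : EuclideanSpace ℝ (Fin 2) ≃ₗᵢ[ℝ] EuclideanSpace ℝ (Fin 2) :=
  (Complex.orthonormalBasisOneI.repr.symm.trans (rotation (Circle.exp t))).trans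
    Complex.orthonormalBasisOneI.repr

lemma vec_eq (s : ℝ) : vec s = Complex.orthonormalBasisOneI.repr (Complex.exp (s * Complex.I)) := by
  ext i
  fin_cases i <;> simp [vec, Complex.exp_ofReal_mul_I_re, Complex.exp_ofReal_mul_I_im]

lemma rot_vec (t s : ℝ) : rot t (vec s) = vec (t + s) := by
  rw [vec_eq, vec_eq, rot]
  simp [rotation_apply, Circle.coe_exp, ← Complex.exp_add, add_mul]

lemma half_eq (k : Fin 4) : halfCircle 4 k = vec ((k : ℕ) * π / 4) := by
  simp [halfCircle, vec]

lemma equiv_of {θ : Fin 4 → ℝ} (t : ℝ) (σ : Equiv.Perm (Fin 4))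
    (h : ∀ i, sin (θ i - (t + ((σ i : Fin 4) : ℕ) * π / 4)) = 0) :
    EquivConfig 2 4 (halfCircle 4) (fun i => vec (θ i)) := by
  have : ∀ i, ∃ s : ℝ, (s = 1 ∨ s = -1) ∧ vec (θ i) = s • rot t (halfCircle 4 (σ i)) := by
    intro i
    rw [half_eq, rot_vec]
    rcases vec_pm (h i) with h | h
    · exact ⟨1, Or.inl rfl, h⟩
    · exact ⟨-1, Or.inr rfl, h⟩
  choose s hs using this
  exact ⟨rot t, σ, s, fun i => (hs i).1, fun i => (hs i).2⟩

lemma equiv_cond {θ : Fin 4 → ℝ} (τ : Equiv.Perm (Fin 4))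
    (h1 : cos (θ (τ 0) - θ (τ 2)) = 0) (h2 : cos (θ (τ 1) - θ (τ 3)) = 0)
    (h3 : cos (θ (τ 0) + θ (τ 2) - θ (τ 1) - θ (τ 3)) = 0) :
    EquivConfig 2 4 (halfCircle 4) (fun i => vec (θ i)) := by
  have key : ∀ ρ : Equiv.Perm (Fin 4),
      (∀ j, sin (θ (τ j) - (θ (τ 0) + ((ρ j : Fin 4) : ℕ) * π / 4)) = 0) →
      EquivConfig 2 4 (halfCircle 4) (fun i => vec (θ i)) := by
    intro ρ hρ
    apply equiv_of (θ (τ 0)) (τ.symm.trans ρ)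
    intro i
    have := hρ (τ.symm i)
    simpa using this
  have sadd : ∀ u v : ℝ, sin u = 0 → sin v = 0 → sin (u+v) = 0 := by
    intro u v hu hv; rw [Real.sin_add, hu, hv]; ring
  have H2 : sin (θ (τ 2) - (θ (τ 0) + 2 * π / 4)) = 0 := by
    rw [show θ (τ 2) - (θ (τ 0) + 2 * π / 4) = -(θ (τ 0) - θ (τ 2)) - π/2 by ring,
      Real.sin_sub_pi_div_two, Real.cos_neg, h1, neg_zero]
  have Hd1 : sin (θ (τ 3) - θ (τ 1) - π/2) = 0 := by
    rw [show θ (τ 3) - θ (τ 1) - π/2 = -(θ (τ 1) - θ (τ 3)) - π/2 by ring,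
      Real.sin_sub_pi_div_two, Real.cos_neg, h2, neg_zero]
  have Hd2 : sin (θ (τ 3) - θ (τ 1) + π/2) = 0 := by
    rw [show θ (τ 3) - θ (τ 1) + π/2 = -(θ (τ 1) - θ (τ 3)) + π/2 by ring,
      Real.sin_add_pi_div_two, Real.cos_neg, h2]
  have Hc : cos (2*(θ (τ 1) - θ (τ 0))) = 0 := by
    have e : 2*(θ (τ 1) - θ (τ 0)) = -(θ (τ 0) + θ (τ 2) - θ (τ 1) - θ (τ 3))
      - (θ (τ 0) - θ (τ 2)) + (θ (τ 1) - θ (τ 3)) := by ring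
    rw [e, f3, Real.cos_neg, h1, h2, h3]; ring
  have Hp : sin (θ (τ 1) - (θ (τ 0) + 1*π/4)) * sin (θ (τ 1) - (θ (τ 0) + 3*π/4)) = 0 := by
    set z := θ (τ 1) - θ (τ 0) with hz
    have e1 : θ (τ 1) - (θ (τ 0) + 1*π/4) = z - π/4 := by rw [hz]; ring
    have e2 : θ (τ 1) - (θ (τ 0) + 3*π/4) = (z + π/4) - π := by rw [hz]; ring
    rw [e1, e2, Real.sin_sub_pi, Real.sin_sub, Real.sin_add, Real.cos_pi_div_four,
      Real.sin_pi_div_four]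
    have h2 : (√2)^2 = 2 := Real.sq_sqrt (by norm_num)
    rw [Real.cos_two_mul'] at Hc
    linear_combination ((√2)^2/4) * Hc
  rcases mul_eq_zero.1 Hp with h | h
  · apply key 1
    intro j
    fin_cases j
    · simp
    · simpa using h
    · simpa using H2
    · have := sadd _ _ Hd1 h
      rw [← this]; congr 1; simp; ring
  · apply key (Equiv.swap 1 3)
    intro j
    fin_cases j
    · simp [Equiv.swap_apply_def]
    · simpa [Equiv.swap_apply_def] using h
    · simpa [Equiv.swap_apply_def] using H2
    · have := sadd _ _ Hd2 h
      rw [← this]; congr 1; simp [Equiv.swap_apply_def]; ring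

lemma term_eq {p : ℝ} (c : ℝ) : (2*c^2)^(p/2) = 2^(p/2) * |c|^p := by
  rw [Real.mul_rpow (by norm_num) (sq_nonneg c), ← sq_abs, ← Real.rpow_natCast,
    ← Real.rpow_mul (abs_nonneg c)]
  congr 2; push_cast; ring

noncomputable def S6 (q t1 t2 t3 t4 : ℝ) : ℝ :=
  (2*cos (t1-t2)^2)^q + (2*cos (t2-t3)^2)^q + (2*cos (t3-t4)^2)^q + (2*cos (t1-t4)^2)^q
      + (2*cos (t1-t3)^2)^q + (2*cos (t2-t4)^2)^q

lemma csymm (s t : ℝ) : cos (s - t) = cos (t - s) := by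
  rw [← Real.cos_neg]; congr 1; ring

lemma fp_eq (p : ℝ) (θ : Fin 4 → ℝ) :
    2^(p/2) * framePotential 2 4 p (fun i => vec (θ i)) =
      2 * S6 (p/2) (θ 0) (θ 1) (θ 2) (θ 3) := by
  simp only [framePotential, S6, term_eq, vec_inner, Fin.sum_univ_four]
  simp
  rw [csymm (θ 1) (θ 0), csymm (θ 2) (θ 0), csymm (θ 3) (θ 0), csymm (θ 2) (θ 1),
    csymm (θ 3) (θ 1), csymm (θ 3) (θ 2)]
  ring

lemma S6_all {q : ℝ} (hq : 1 < q) (θ : Fin 4 → ℝ) :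
    4 ≤ S6 q (θ 0) (θ 1) (θ 2) (θ 3) ∧ (S6 q (θ 0) (θ 1) (θ 2) (θ 3) = 4 →
      EquivConfig 2 4 (halfCircle 4) (fun i => vec (θ i))) := by
  have main : ∀ τ : Equiv.Perm (Fin 4),
      sin (θ (τ 0)-θ (τ 1)) * sin (θ (τ 1)-θ (τ 2)) * sin (θ (τ 2)-θ (τ 3)) * sin (θ (τ 3)-θ (τ 0)) ≤ 0 →
      S6 q (θ (τ 0)) (θ (τ 1)) (θ (τ 2)) (θ (τ 3)) = S6 q (θ 0) (θ 1) (θ 2) (θ 3) →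
      4 ≤ S6 q (θ 0) (θ 1) (θ 2) (θ 3) ∧ (S6 q (θ 0) (θ 1) (θ 2) (θ 3) = 4 →
      EquivConfig 2 4 (halfCircle 4) (fun i => vec (θ i))) := by
    intro τ hP he
    have h := mainF hq hP
    rw [← he]
    refine ⟨h.1, fun h0 => ?_⟩
    obtain ⟨a, b, c⟩ := h.2 h0
    exact equiv_cond τ a b c
  rcases cross (θ 0) (θ 1) (θ 2) (θ 3) with h | h | h
  · exact main 1 (by simpa using h) (by simp)
  · apply main (Equiv.swap 1 2)
    · simpa [Equiv.swap_apply_def] using h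
    · simp [Equiv.swap_apply_def, S6]
      rw [csymm (θ 2) (θ 1)]; ring
  · apply main (Equiv.swap 2 3)
    · simpa [Equiv.swap_apply_def] using h
    · simp [Equiv.swap_apply_def, S6]
      rw [csymm (θ 3) (θ 2)]; ring

lemma S6_half {q : ℝ} (hq : 1 < q) :
    S6 q (0*π/4) (1*π/4) (2*π/4) (3*π/4) = 4 := by
  have hc : 2 * cos (π/4)^2 = 1 := by
    rw [Real.cos_pi_div_four, div_pow, Real.sq_sqrt (by norm_num)]; norm_num
  have h1 : 2 * cos (0*π/4 - 1*π/4)^2 = 1 := by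
    rw [csymm, show 1*π/4 - 0*π/4 = π/4 by ring, hc]
  have h2 : 2 * cos (1*π/4 - 2*π/4)^2 = 1 := by
    rw [csymm, show 2*π/4 - 1*π/4 = π/4 by ring, hc]
  have h3 : 2 * cos (2*π/4 - 3*π/4)^2 = 1 := by
    rw [csymm, show 3*π/4 - 2*π/4 = π/4 by ring, hc]
  have h4 : 2 * cos (0*π/4 - 3*π/4)^2 = 1 := by
    rw [csymm, show 3*π/4 - 0*π/4 = π - π/4 by ring, Real.cos_pi_sub, neg_sq, hc]
  have h5 : 2 * cos (0*π/4 - 2*π/4)^2 = 0 := by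
    rw [csymm, show 2*π/4 - 0*π/4 = π/2 by ring, Real.cos_pi_div_two]; norm_num
  have h6 : 2 * cos (1*π/4 - 3*π/4)^2 = 0 := by
    rw [csymm, show 3*π/4 - 1*π/4 = π/2 by ring, Real.cos_pi_div_two]; norm_num
  rw [S6, h1, h2, h3, h4, h5, h6, Real.one_rpow, Real.zero_rpow (by linarith)]; norm_num

/-- For `p > 2`, `X_4^(h)` is the unique (up to equivalence) minimizer of the
`p`-frame potential `FP_{p,4,2}` over `S(4,2)`. -/
theorem halfCircle_four_unique_minimizer
    (p : ℝ) (hp : 2 < p) :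
    (∀ X : Fin 4 → EuclideanSpace ℝ (Fin 2), (∀ i, ‖X i‖ = 1) →
      framePotential 2 4 p (halfCircle 4) ≤ framePotential 2 4 p X) ∧
    (∀ X : Fin 4 → EuclideanSpace ℝ (Fin 2), (∀ i, ‖X i‖ = 1) →
      framePotential 2 4 p X = framePotential 2 4 p (halfCircle 4) →
      EquivConfig 2 4 (halfCircle 4) X) := by
  have hfp : 2^(p/2) * framePotential 2 4 p (halfCircle 4) = 8 := by
    have e : halfCircle 4 = fun i : Fin 4 => vec (((i : ℕ) : ℝ) * π / 4) := by
      funext k; exact half_eq k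
    have h := fp_eq p (fun i : Fin 4 => ((i : ℕ) : ℝ) * π / 4)
    rw [← e] at h
    rw [h]
    have h4 := S6_half (q := p/2) (by linarith)
    have e2 : S6 (p/2) (((0 : Fin 4) : ℕ) * π / 4) (((1 : Fin 4) : ℕ) * π / 4)
        (((2 : Fin 4) : ℕ) * π / 4) (((3 : Fin 4) : ℕ) * π / 4) = 4 := by
      refine Eq.trans ?_ h4; norm_num
    rw [e2]; norm_num
  have h2 : (0:ℝ) < 2^(p/2) := by positivity
  constructor
  · intro X hX
    choose θ hθ using fun i => exists_vec (X i) (hX i)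
    obtain rfl : X = fun i => vec (θ i) := funext hθ
    have h := (S6_all (q := p/2) (by linarith) θ).1
    have he := fp_eq p θ
    refine le_of_mul_le_mul_left ?_ h2
    linarith
  · intro X hX heq
    choose θ hθ using fun i => exists_vec (X i) (hX i)
    obtain rfl : X = fun i => vec (θ i) := funext hθ
    have he := fp_eq p θ
    rw [heq, hfp] at he
    exact (S6_all (q := p/2) (by linarith) θ).2 (by linarith)
end

section
/- Let N ≥ 5 and let p be an even integer with 2 < p ≤ 2N−2 if N is even, and 2 < p ≤ 2N−4 if N is odd. Then X_N^(h) minimizes the p-frame potential: FP_{p,N,2}(X_N^(h)) ≤ FP_{p,N,2}(X) for every X ∈ S(N,2), i.e., FP_{p,N,2}(X_N^(h)) = F_{p,N,2}. -/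
open scoped RealInnerProductSpace
open Real

/-- `F_{p,N,d}`, the minimum of the `p`-frame potential over `S(N,d)`. -/
noncomputable def minFramePotential (d N : ℕ) (p : ℝ) : ℝ :=
  sInf (framePotential d N p '' {X | ∀ i, ‖X i‖ = 1})

lemma hc_aux_expand (N m : ℕ) (u : Fin N → ℂ) :
    ∑ k, ∑ l, ((u k * starRingEnd ℂ (u l)).re) ^ (2 * m) =
      ∑ j ∈ Finset.range (2 * m + 1), ((2 * m).choose j : ℝ) / 4 ^ m *
        Complex.normSq (∑ k, u k ^ j * (starRingEnd ℂ (u k)) ^ (2 * m - j)) := by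
  apply Complex.ofReal_injective
  push_cast
  have h4 : ∀ z : ℂ, ((z.re : ℂ)) ^ (2 * m) = (z + starRingEnd ℂ z) ^ (2 * m) / 4 ^ m := by
    intro z
    rw [Complex.re_eq_add_conj, div_pow, pow_mul 2 2 m]
    norm_num
  simp_rw [h4, ← Complex.mul_conj, add_pow, map_sum, Finset.sum_mul_sum,
    Finset.mul_sum, Finset.sum_div]
  symm
  rw [Finset.sum_comm]
  refine Finset.sum_congr rfl fun k _ => ?_
  rw [Finset.sum_comm]
  refine Finset.sum_congr rfl fun l _ => ?_
  refine Finset.sum_congr rfl fun j _ => ?_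
  simp only [map_mul, map_pow, Complex.conj_conj, mul_pow]
  ring

lemma hc_aux_lower (N m : ℕ) (u : Fin N → ℂ) (hu : ∀ k, Complex.normSq (u k) = 1) :
    ((2 * m).choose m : ℝ) / 4 ^ m * (N : ℝ) ^ 2 ≤
      ∑ k, ∑ l, ((u k * starRingEnd ℂ (u l)).re) ^ (2 * m) := by
  rw [hc_aux_expand]
  refine le_trans (le_of_eq ?_) (Finset.single_le_sum (f := fun j => ((2 * m).choose j : ℝ) / 4 ^ m *
        Complex.normSq (∑ k, u k ^ j * (starRingEnd ℂ (u k)) ^ (2 * m - j))) (a := m) ?_ ?_)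
  · have h : 2 * m - m = m := by omega
    simp only [h, ← mul_pow, Complex.mul_conj, hu]
    simp [Complex.normSq_apply, sq]
  · intro j _
    exact mul_nonneg (by positivity) (Complex.normSq_nonneg _)
  · simp; omega

lemma hc_aux_eq (N m : ℕ) (hN : 0 < N) (hm : m < N) :
    ∑ k : Fin N, ∑ l : Fin N, ((Complex.exp (((k : ℕ) * π / N : ℝ) * Complex.I) *
      starRingEnd ℂ (Complex.exp (((l : ℕ) * π / N : ℝ) * Complex.I))).re) ^ (2 * m) =
    ((2 * m).choose m : ℝ) / 4 ^ m * (N : ℝ) ^ 2 := by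
  rw [hc_aux_expand N m (fun k => Complex.exp (((k : ℕ) * π / N : ℝ) * Complex.I))]
  have hN' : (N : ℂ) ≠ 0 := by exact_mod_cast hN.ne'
  have key : ∀ j ≤ 2 * m, ∀ k : ℕ, Complex.exp (((k : ℕ) * π / N : ℝ) * Complex.I) ^ j *
      (starRingEnd ℂ (Complex.exp (((k : ℕ) * π / N : ℝ) * Complex.I))) ^ (2 * m - j) =
      Complex.exp (2 * π * Complex.I * (((j : ℤ) - m : ℤ) / N : ℂ)) ^ k := by
    intro j hj k
    rw [← Complex.exp_conj, ← Complex.exp_nat_mul, ← Complex.exp_nat_mul, ← Complex.exp_nat_mul,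
      ← Complex.exp_add]
    congr 1
    simp only [map_mul, Complex.conj_ofReal, Complex.conj_I]
    push_cast [Nat.cast_sub hj]
    field_simp
    ring
  rw [Finset.sum_eq_single m]
  · simp only [key m (by omega)]
    simp [Complex.normSq_apply, sq]
  · intro j hj hjm
    have hj' : j ≤ 2 * m := by simp at hj; omega
    simp only [key j hj']
    rw [Fin.sum_univ_eq_sum_range (fun k => Complex.exp (2 * π * Complex.I * (((j : ℤ) - m : ℤ) / N : ℂ)) ^ k) N,
      geom_sum_eq, ← Complex.exp_nat_mul]
    · have : (N : ℂ) * (2 * π * Complex.I * (((j : ℤ) - m : ℤ) / N : ℂ)) =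
        ((j : ℤ) - m : ℤ) * (2 * π * Complex.I) := by field_simp
      rw [this, Complex.exp_int_mul_two_pi_mul_I]; simp
    · intro h
      rw [Complex.exp_eq_one_iff] at h
      obtain ⟨n, hn⟩ := h
      have h1 : (((j : ℤ) - m : ℤ) : ℂ) = ((n * N : ℤ) : ℂ) := by
        have h2 := Complex.two_pi_I_ne_zero
        rw [mul_comm] at hn
        have := mul_right_cancel₀ h2 hn
        rw [div_eq_iff hN'] at this
        push_cast at this ⊢
        exact this
      have h3 : ((j : ℤ) - m : ℤ) = n * N := by exact_mod_cast h1
      have h4 : ((j : ℤ) - m) = 0 := by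
        apply Int.eq_zero_of_abs_lt_dvd (m := N) ⟨n, by rw [h3]; ring⟩
        rw [abs_lt]; constructor <;> omega
      omega
  · intro h; simp at h; omega

lemma hc_aux_fp (N m : ℕ) (X : Fin N → EuclideanSpace ℝ (Fin 2)) (hX : ∀ i, ‖X i‖ = 1) :
    framePotential 2 N ((2 * m : ℕ) : ℝ) X =
      ∑ k, ∑ l, (((⟨X k 0, X k 1⟩ : ℂ) * starRingEnd ℂ (⟨X l 0, X l 1⟩ : ℂ)).re) ^ (2 * m) - N := by
  have h : ∀ k l, (((⟨X k 0, X k 1⟩ : ℂ) * starRingEnd ℂ (⟨X l 0, X l 1⟩ : ℂ)).re) = ⟪X k, X l⟫ := by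
    intro k l
    simp [PiLp.inner_apply, Fin.sum_univ_two]; ring
  simp_rw [h]
  rw [eq_sub_iff_add_eq]
  unfold framePotential
  have : (N : ℝ) = ∑ k : Fin N, ∑ l : Fin N, if k = l then (1 : ℝ) else 0 := by simp
  rw [this, ← Finset.sum_add_distrib]
  refine Finset.sum_congr rfl fun k _ => ?_
  rw [← Finset.sum_add_distrib]
  refine Finset.sum_congr rfl fun l _ => ?_
  by_cases hkl : k = l
  · subst hkl
    simp [real_inner_self_eq_norm_sq, hX]
  · simp only [ne_eq, hkl, not_false_eq_true, if_true, if_false, add_zero]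
    rw [Real.rpow_natCast, Even.pow_abs (even_two_mul m)]

/-- For `N ≥ 5` and an even integer `p` with `2 < p ≤ 2N−2` (`N` even) resp.
`2 < p ≤ 2N−4` (`N` odd), `X_N^(h)` minimizes the `p`-frame potential `FP_{p,N,2}`,
i.e. `FP_{p,N,2}(X_N^(h)) = F_{p,N,2}`. -/
theorem halfCircle_minimizer_even_p
    (N : ℕ) (hN : 5 ≤ N) (p : ℕ) (hpe : Even p) (hp2 : 2 < p)
    (hpeven : Even N → p ≤ 2 * N - 2)
    (hpodd : ¬ Even N → p ≤ 2 * N - 4) :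
    (∀ X : Fin N → EuclideanSpace ℝ (Fin 2), (∀ i, ‖X i‖ = 1) →
      framePotential 2 N (p : ℝ) (halfCircle N) ≤ framePotential 2 N (p : ℝ) X) ∧
    framePotential 2 N (p : ℝ) (halfCircle N) = minFramePotential 2 N (p : ℝ) := by
  obtain ⟨m, rfl⟩ := hpe
  rw [← two_mul] at *
  have hm : m < N := by
    by_cases h : Even N
    · have := hpeven h; omega
    · have := hpodd h; omega
  have hunit : ∀ i, ‖halfCircle N i‖ = 1 := by
    intro i
    simp [halfCircle, EuclideanSpace.norm_eq, Fin.sum_univ_two]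
  have main : ∀ X : Fin N → EuclideanSpace ℝ (Fin 2), (∀ i, ‖X i‖ = 1) →
      framePotential 2 N ((2 * m : ℕ) : ℝ) (halfCircle N) ≤
        framePotential 2 N ((2 * m : ℕ) : ℝ) X := by
    intro X hX
    rw [hc_aux_fp N m _ hunit, hc_aux_fp N m X hX]
    have hexp : ∀ k : Fin N, (⟨halfCircle N k 0, halfCircle N k 1⟩ : ℂ) =
        Complex.exp (((k : ℕ) * π / N : ℝ) * Complex.I) := by
      intro k
      apply Complex.ext
      · rw [Complex.exp_ofReal_mul_I_re]; simp [halfCircle]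
      · rw [Complex.exp_ofReal_mul_I_im]; simp [halfCircle]
    simp_rw [hexp]
    rw [hc_aux_eq N m (by omega) hm]
    have := hc_aux_lower N m (fun k => (⟨X k 0, X k 1⟩ : ℂ)) (by
      intro k
      have h := hX k
      rw [EuclideanSpace.norm_eq, Real.sqrt_eq_one, Fin.sum_univ_two] at h
      simp only [Real.norm_eq_abs, sq_abs] at h
      rw [Complex.normSq_mk]; linarith)
    linarith
  refine ⟨main, ?_⟩
  symm
  apply IsLeast.csInf_eq
  refine ⟨⟨_, hunit, rfl⟩, ?_⟩
  rintro _ ⟨X, hX, rfl⟩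
  exact main X hX
end
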